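/- arXiv:1602.09119 — 2 statements merged into one kernel-verified Lean document; each statement's English description precedes it below -/
import Mathlib

section
/- The polynomials x⁷ − 7x + 3 and x⁸ − 4x⁷ + 7x⁶ − 7x⁵ + 7x⁴ − 7x³ + 7x² + 5x + 1 are irreducible over ℚ and have isomorphic splitting fields over ℚ; their common Galois group is isomorphic to PSL₂(𝔽₇). -/
open Polynomial
open scoped MatrixGroups

noncomputable section

/-- The Trinks polynomial `x⁷ − 7x + 3`. -/
def f13a : ℚ[X] := X ^ 7 - 7 * X + 3

def f13b : ℚ[X] :=
  X ^ 8 - 4 * X ^ 7 + 7 * X ^ 6 - 7 * X ^ 5 + 7 * X ^ 4 - 7 * X ^ 3 + 7 * X ^ 2 + 5 * X + 1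


/-- resolvent septic -/
def gval {K : Type*} [Field K] (b : K) : K := b^7 + 14*b^4 - 42*b^2 - 21*b + 9

def p2 {K : Type*} [Field K] (b : K) : K := (42) + ((-131))*b + ((-120))*b^2 + ((232/3))*b^3 + (19)*b^4 + ((-12))*b^5 + ((23/3))*b^6

def p3 {K : Type*} [Field K] (b : K) : K := ((-61)) + (178)*b + (170)*b^2 + (((-319/3)))*b^3 + ((-27))*b^4 + (17)*b^5 + (((-32/3)))*b^6

def dd {K : Type*} [Field K] (b : K) : K := ((-1974)) + (5929)*b + (5502)*b^2 + (((-10528/3)))*b^3 + ((-861))*b^4 + (546)*b^5 + (((-1043/3)))*b^6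

lemma fac_id {K : Type*} [Field K] [CharZero K] (b x : K) (hb : gval b = 0) :
    x^7 - 7*x + 3 = (x^3 - b*x^2 + p2 b * x - p3 b) *
      (((-24) + 77*x + (-42)*x^2 + 1*x^4) + (84 + (-228)*x + 131*x^2 + 1*x^3)*b + (71 + (-212)*x + 121*x^2)*b^2 + (((-145/3)) + (404/3)*x + ((-232/3))*x^2)*b^3 + ((-11) + 33*x + (-19)*x^2)*b^4 + (7 + (-21)*x + 12*x^2)*b^5 + (((-14/3)) + (40/3)*x + ((-23/3))*x^2)*b^6) := by
  unfold gval at hb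
  unfold p2 p3
  linear_combination (-(((-163) + (1232/3)*x + (224/3)*x^2 + ((-596/3))*x^3 + (46/3)*x^4) + ((1991/3) + ((-4106/3))*x + ((-868/3))*x^2 + (2300/3)*x^3)*b + ((550/9) + ((-2074/9))*x + ((-97/9))*x^2 + (838/9)*x^3)*b^2 + (((-1087/3)) + 812*x + (434/3)*x^2 + ((-1306/3))*x^3)*b^3 + (154 + (-341)*x + ((-188/3))*x^2 + 184*x^3)*b^4 + (((-448/9)) + (958/9)*x + (184/9)*x^2 + ((-529/9))*x^3)*b^5)) * hb

lemma disc_id {K : Type*} [Field K] [CharZero K] (b : K) (hb : gval b = 0) :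
    b^2*(p2 b)^2 - 4*(p2 b)^3 - 4*b^3*p3 b + 18*b*p2 b*p3 b - 27*(p3 b)^2 = dd b := by
  unfold gval at hb
  unfold p2 p3 dd
  linear_combination ((((-131615/3))) + (265110)*b + (((-2405104/9)))*b^2 + (((-5118674/9)))*b^3 + ((3920000/9))*b^4 + ((5384848/27))*b^5 + (((-2059540/9)))*b^6 + ((638197/9))*b^7 + ((527944/27))*b^8 + (((-79948/3)))*b^9 + (8464)*b^10 + (((-48668/27)))*b^11) * hb

def vc0 {K : Type*} [Field K] (t : K) : K := ((-13734)) + ((-48438))*t + (51210)*t^2 + ((-55368))*t^3 + (54612)*t^4 + ((-47574))*t^5 + (24480)*t^6 + ((-5562))*t^7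

def vc1 {K : Type*} [Field K] (t : K) : K := (41427) + (142920)*t + ((-151692))*t^2 + (164064)*t^3 + ((-161628))*t^4 + (140940)*t^5 + ((-72624))*t^6 + (16524)*t^7

def vc2 {K : Type*} [Field K] (t : K) : K := (39443) + (137076)*t + ((-145044))*t^2 + (156634)*t^3 + ((-154338))*t^4 + (134586)*t^5 + ((-69370))*t^6 + (15792)*t^7

def vc3 {K : Type*} [Field K] (t : K) : K := ((-24791)) + ((-85784))*t + (90928)*t^2 + ((-98256))*t^3 + (96794)*t^4 + ((-84416))*t^5 + (43508)*t^6 + ((-9902))*t^7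

def vc4 {K : Type*} [Field K] (t : K) : K := ((-6321)) + ((-21948))*t + (23196)*t^2 + ((-25020))*t^3 + (24654)*t^4 + ((-21504))*t^5 + (11088)*t^6 + ((-2526))*t^7

def vc5 {K : Type*} [Field K] (t : K) : K := (3958) + (13758)*t + ((-14550))*t^2 + (15704)*t^3 + ((-15474))*t^4 + (13494)*t^5 + ((-6956))*t^6 + (1584)*t^7

def vc6 {K : Type*} [Field K] (t : K) : K := ((-2488)) + ((-8620))*t + (9128)*t^2 + ((-9858))*t^3 + (9712)*t^4 + ((-8470))*t^5 + (4366)*t^6 + ((-994))*t^7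

def vv {K : Type*} [Field K] (b t : K) : K := vc0 t * b^0 + vc1 t * b^1 + vc2 t * b^2 + vc3 t * b^3 + vc4 t * b^4 + vc5 t * b^5 + vc6 t * b^6

lemma vv_lin {K : Type*} [Field K] [CharZero K] (t : K) :
    ((-1/189))*vc0 t + ((-1/126))*vc1 t + ((5/252))*vc2 t + ((1/18))*vc3 t + ((5/252))*vc4 t + ((-4/9))*vc5 t + ((-277/252))*vc6 t = t - 1/2 := by
  unfold vc0 vc1 vc2 vc3 vc4 vc5 vc6
  ring

set_option maxHeartbeats 4000000 in
lemma vv_sq {K : Type*} [Field K] [CharZero K] (b t : K) (hb : gval b = 0)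
    (ht : t^8 - 4*t^7 + 7*t^6 - 7*t^5 + 7*t^4 - 7*t^3 + 7*t^2 + 5*t + 1 = 0) :
    (vv b t)^2 = 3969 * dd b := by
  unfold gval at hb
  unfold vv vc0 vc1 vc2 vc3 vc4 vc5 vc6 dd
  linear_combination ((19817066 + 139915284*t + 98694588*t^2 + (-362541028)*t^3 + 684982500*t^4 + (-1019260560)*t^5 + 1330018620*t^6 + (-1388138940)*t^7 + 1193924952*t^8 + (-896003824)*t^9 + 587074560*t^10 + (-310627752)*t^11 + 119421560*t^12 + (-28818912)*t^13 + 3271344*t^14) + ((-76828771) + (-532095988)*t + (-356719204)*t^2 + 1344293068*t^3 + (-2550268840)*t^4 + 3802429968*t^5 + (-4970161812)*t^6 + 5192828064*t^7 + (-4468495164)*t^8 + 3353911736*t^9 + (-2197997032)*t^10 + 1163437112*t^11 + (-447595160)*t^12 + 108136472*t^13 + (-12297468)*t^14)*b + ((-13339036) + (-93914660)*t + (-66855204)*t^2 + 240775804*t^3 + (-449203796)*t^4 + 665531232*t^5 + (-866361964)*t^6 + 902001580*t^7 + (-773822128)*t^8 + 579961176*t^9 + (-380228424)*t^10 + 201521104*t^11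 + (-77686296)*t^12 + 18824840*t^13 + (-2149696)*t^14)*b^2 + (47119060 + 327095616*t + 221668812*t^2 + (-827502308)*t^3 + 1563401916*t^4 + (-2327319204)*t^5 + 3039242292*t^6 + (-3172800684)*t^7 + 2728110996*t^8 + (-2046827168)*t^9 + 1341584772*t^10 + (-710430984)*t^11 + 273495736*t^12 + (-66136584)*t^13 + 7530744*t^14)*b^3 + ((-19695008) + (-136695728)*t + (-92529872)*t^2 + 345829016*t^3 + (-653735672)*t^4 + 973372512*t^5 + (-1271255376)*t^6 + 1327249152*t^7 + (-1141338840)*t^8 + 856351744*t^9 + (-561270368)*t^10 + 297194176*t^11 + (-114398824)*t^12 + 27660016*t^13 + (-3148992)*t^14)*b^4 + (6190144 + 42893120*t + 28883472*t^2 + (-108313312)*t^3 + 204945392*t^4 + (-305255808)*t^5 + 398780020*t^6 + (-416433808)*t^7 + 358159720*t^8 + (-268747800)*t^9 + 176143788*t^10 + (-93267496)*t^11 + 35900316*t^12 + (-8679608)*t^13 + 988036*t^14)*b^5) * hb + ((18103968 + (-19262412)*t + 20936556*t^2 + (-20420604)*t^3 + 15352020*t^4 + (-6970320)*t^5 + 1493748*t^6)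 + ((-53831712) + 57234804*t + (-62181576)*t^2 + 60653436*t^3 + (-45605748)*t^4 + 20708856*t^5 + (-4437540)*t^6)*b + ((-50097528) + 53355804*t + (-58046568)*t^2 + 56649612*t^3 + (-42556308)*t^4 + 19295304*t^5 + (-4130748)*t^6)*b^2 + (31898376 + (-33941928)*t + 36895260*t^2 + (-35994888)*t^3 + 27056640*t^4 + (-12278784)*t^5 + 2629896*t^6)*b^3 + (7836168 + (-8349828)*t + 9088452*t^2 + (-8874240)*t^3 + 6662172*t^4 + (-3017448)*t^5 + 645696*t^6)*b^4 + ((-4971528) + 5295936*t + (-5762856)*t^2 + 5625636*t^3 + (-4224720)*t^4 + 1914528*t^5 + (-409788)*t^6)*b^5 + (3160872 + (-3364908)*t + 3659352*t^2 + (-3571128)*t^3 + 2683140*t^4 + (-1216824)*t^5 + 260544*t^6)*b^6) * ht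
lemma key_fac (F : ℤ[X]) (c : ℤ) (r : (ZMod 7)[X])
    (hF : F.map (Int.castRingHom (ZMod 7)) = (X - C (c : ZMod 7)) ^ 7 * r)
    (h : ¬ (49 : ℤ) ∣ F.eval c) (p q : ℤ[X]) (hpq : p * q = F) :
    p.map (Int.castRingHom (ZMod 7)) ∣ r ∨ q.map (Int.castRingHom (ZMod 7)) ∣ r := by
  have : Fact (Nat.Prime 7) := ⟨by norm_num⟩
  have aux : ∀ p : ℤ[X], p.map (Int.castRingHom (ZMod 7)) ∣ F.map (Int.castRingHom (ZMod 7)) →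
      ¬ (7 : ℤ) ∣ p.eval c → p.map (Int.castRingHom (ZMod 7)) ∣ r := by
    intro p hd hp
    rw [hF] at hd
    refine IsCoprime.dvd_of_dvd_mul_left (IsCoprime.pow_right ?_) hd
    refine IsCoprime.symm ((Polynomial.irreducible_X_sub_C _).coprime_iff_not_dvd.2 ?_)
    rw [Polynomial.dvd_iff_isRoot, Polynomial.IsRoot.def]
    intro h0
    apply hp
    have h1 := Polynomial.eval_map_apply (p := p) (Int.castRingHom (ZMod 7)) c
    simp only [eq_intCast] at h1
    rw [h1] at h0
    exact_mod_cast (ZMod.intCast_zmod_eq_zero_iff_dvd _ 7).1 h0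
  have hm : p.map (Int.castRingHom (ZMod 7)) * q.map (Int.castRingHom (ZMod 7)) =
      F.map (Int.castRingHom (ZMod 7)) := by rw [← Polynomial.map_mul, hpq]
  by_cases h1 : (7 : ℤ) ∣ p.eval c
  · by_cases h2 : (7 : ℤ) ∣ q.eval c
    · exfalso
      apply h
      rw [← hpq, Polynomial.eval_mul]
      exact mul_dvd_mul h1 h2
    · exact Or.inr (aux q (Dvd.intro_left _ hm) h2)
  · exact Or.inl (aux p (Dvd.intro _ hm) h1)

lemma irr_of_seven (F : ℤ[X]) (hm : F.Monic) (hd : F.natDegree = 7) (c : ℤ)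
    (hF : F.map (Int.castRingHom (ZMod 7)) = (X - C (c : ZMod 7)) ^ 7)
    (h : ¬ (49 : ℤ) ∣ F.eval c) : Irreducible (F.map (Int.castRingHom ℚ)) := by
  have : Fact (Nat.Prime 7) := ⟨by norm_num⟩
  refine (hm.irreducible_iff_irreducible_map_fraction_map (K := ℚ)).1 ?_
  rw [Polynomial.irreducible_of_monic hm (by rintro rfl; simp at hd)]
  intro p q hp hq hpq
  have aux : ∀ p : ℤ[X], p.Monic → p.map (Int.castRingHom (ZMod 7)) ∣ 1 → p = 1 := by
    intro p hp h1
    have h2 := Polynomial.natDegree_eq_zero_of_isUnit (isUnit_of_dvd_one h1)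
    rw [hp.natDegree_map] at h2
    exact hp.natDegree_eq_zero.1 h2
  rcases key_fac F c 1 (by rw [hF, mul_one]) h p q hpq with h1 | h1
  · exact Or.inl (aux p hp h1)
  · exact Or.inr (aux q hq h1)

lemma irr_of_eight (F : ℤ[X]) (hm : F.Monic) (hd : F.natDegree = 8) (c : ℤ) (d : ZMod 7)
    (hF : F.map (Int.castRingHom (ZMod 7)) = (X - C (c : ZMod 7)) ^ 7 * (X - C d))
    (h : ¬ (49 : ℤ) ∣ F.eval c) (hr : ∀ n : ℤ, F.eval n ≠ 0) :
    Irreducible (F.map (Int.castRingHom ℚ)) := by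
  have : Fact (Nat.Prime 7) := ⟨by norm_num⟩
  refine (hm.irreducible_iff_irreducible_map_fraction_map (K := ℚ)).1 ?_
  rw [Polynomial.irreducible_of_monic hm (by rintro rfl; simp at hd)]
  intro p q hp hq hpq
  have aux : ∀ p : ℤ[X], p.Monic → p ∣ F → p.map (Int.castRingHom (ZMod 7)) ∣ (X - C d) →
      p = 1 := by
    intro p hp hpF h1
    have h2 := Polynomial.natDegree_le_of_dvd h1 (Polynomial.X_sub_C_ne_zero d)
    rw [hp.natDegree_map, Polynomial.natDegree_X_sub_C] at h2
    rcases Nat.le_one_iff_eq_zero_or_eq_one.1 h2 with h3 | h3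
    · exact hp.natDegree_eq_zero.1 h3
    · exfalso
      have h4 := hp.eq_X_add_C h3
      obtain ⟨s, hs⟩ := hpF
      apply hr (-(p.coeff 0))
      rw [hs, Polynomial.eval_mul]
      conv_lhs => rw [h4]
      simp
  rcases key_fac F c _ hF h p q hpq with h1 | h1
  · exact Or.inl (aux p hp (Dvd.intro _ hpq) h1)
  · exact Or.inr (aux q hq (Dvd.intro_left _ hpq) h1)

lemma irr_a : Irreducible f13a := by
  have h7 : (7 : (ZMod 7)[X]) = 0 := by
    have : ((7 : ℕ) : (ZMod 7)[X]) = 0 := CharP.cast_eq_zero _ 7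
    exact_mod_cast this
  have hd : (X ^ 7 - 7 * X + 3 : ℤ[X]).natDegree = 7 := by compute_degree!
  have := irr_of_seven (X ^ 7 - 7 * X + 3 : ℤ[X]) (by monicity!) hd (-3)
    (by
      simp only [Polynomial.map_add, Polynomial.map_sub, Polynomial.map_mul, Polynomial.map_pow,
        Polynomial.map_X, Polynomial.map_ofNat]
      have : (C ((-3 : ℤ) : ZMod 7)) = (-3 : (ZMod 7)[X]) := by simp; rfl
      rw [this]
      linear_combination ((-312) * X ^ 0 + (-730) * X ^ 1 + (-729) * X ^ 2 + (-405) * X ^ 3 + (-135) * X ^ 4 + (-27) * X ^ 5 + (-3) * X ^ 6) * h7)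
    (by norm_num)
  simpa [f13a] using this

def gpol : ℚ[X] := X ^ 7 + 14 * X ^ 4 - 42 * X ^ 2 - 21 * X + 9

lemma irr_g : Irreducible gpol := by
  have h7 : (7 : (ZMod 7)[X]) = 0 := by
    have : ((7 : ℕ) : (ZMod 7)[X]) = 0 := CharP.cast_eq_zero _ 7
    exact_mod_cast this
  have hd : (X ^ 7 + 14 * X ^ 4 - 42 * X ^ 2 - 21 * X + 9 : ℤ[X]).natDegree = 7 := by
    compute_degree!
  have := irr_of_seven (X ^ 7 + 14 * X ^ 4 - 42 * X ^ 2 - 21 * X + 9 : ℤ[X]) (by monicity!) hd (-2)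
    (by
      simp only [Polynomial.map_add, Polynomial.map_sub, Polynomial.map_mul, Polynomial.map_pow,
        Polynomial.map_X, Polynomial.map_ofNat]
      have : (C ((-2 : ℤ) : ZMod 7)) = (-2 : (ZMod 7)[X]) := by simp; rfl
      rw [this]
      linear_combination ((-17) * X ^ 0 + (-67) * X ^ 1 + (-102) * X ^ 2 + (-80) * X ^ 3 + (-38) * X ^ 4 + (-12) * X ^ 5 + (-2) * X ^ 6) * h7)
    (by norm_num)
  simpa [gpol] using this

lemma irr_b : Irreducible f13b := by
  have h7 : (7 : (ZMod 7)[X]) = 0 := by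
    have : ((7 : ℕ) : (ZMod 7)[X]) = 0 := CharP.cast_eq_zero _ 7
    exact_mod_cast this
  have hd : (X ^ 8 - 4 * X ^ 7 + 7 * X ^ 6 - 7 * X ^ 5 + 7 * X ^ 4 - 7 * X ^ 3 + 7 * X ^ 2 +
    5 * X + 1 : ℤ[X]).natDegree = 8 := by compute_degree!
  have := irr_of_eight (X ^ 8 - 4 * X ^ 7 + 7 * X ^ 6 - 7 * X ^ 5 + 7 * X ^ 4 - 7 * X ^ 3 +
    7 * X ^ 2 + 5 * X + 1 : ℤ[X]) (by monicity!) hd 2 4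
    (by
      simp only [Polynomial.map_add, Polynomial.map_sub, Polynomial.map_mul, Polynomial.map_pow,
        Polynomial.map_X, Polynomial.map_ofNat, Polynomial.map_one]
      have : (C ((2 : ℤ) : ZMod 7)) = (2 : (ZMod 7)[X]) := by simp; rfl
      have h' : (C (4 : ZMod 7)) = (4 : (ZMod 7)[X]) := rfl
      rw [this, h']
      linear_combination ((-73) * X ^ 0 + (275) * X ^ 1 + (-447) * X ^ 2 + (415) * X ^ 3 + (-239) * X ^ 4 + (87) * X ^ 5 + (-19) * X ^ 6 + (2) * X ^ 7) * h7)
    (by norm_num)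
    (by
      intro n hn
      have h1 : n * (-(n ^ 7 - 4 * n ^ 6 + 7 * n ^ 5 - 7 * n ^ 4 + 7 * n ^ 3 - 7 * n ^ 2 + 7 * n + 5)) = 1 := by
        simp at hn
        linear_combination -hn
      rcases Int.isUnit_iff.1 (IsUnit.of_mul_eq_one _ h1) with rfl | rfl <;> norm_num at hn)
  simpa [f13b] using this

instance fact7 : Fact (Nat.Prime 7) := ⟨by norm_num⟩

def pw : ZMod 7 → ZMod 7 := ![0, 2, 1, 6, 4, 5, 3]

def act0 (a b c d x : ZMod 7) : ZMod 7 :=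
  if c = 0 then a * a * x + a * b else a * c ^ 5 + pw (c * c * x + c * d)

lemma act0_lower : ∀ a b c d : ZMod 7, a * d - b * c = 1 → ∀ s x : ZMod 7,
    act0 (a + b * s) b (c + d * s) d x = act0 a b c d (act0 1 0 s 1 x) := by
  decide +kernel

lemma act0_upper : ∀ a b c d : ZMod 7, a * d - b * c = 1 → ∀ s x : ZMod 7,
    act0 a (a * s + b) c (c * s + d) x = act0 a b c d (act0 1 s 0 1 x) := by
  decide +kernel

def act7 (g : SL(2, ZMod 7)) (x : ZMod 7) : ZMod 7 := act0 (g 0 0) (g 0 1) (g 1 0) (g 1 1) x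

lemma sl_det (g : SL(2, ZMod 7)) : g 0 0 * g 1 1 - g 0 1 * g 1 0 = 1 := by
  have := g.det_coe
  rwa [Matrix.det_fin_two] at this

lemma act7_mul (h : SL(2, ZMod 7)) : ∀ g x, act7 (g * h) x = act7 g (act7 h x) := by
  refine Matrix.SL2.transvection_induction (F := ZMod 7)
    (P := fun h => ∀ g x, act7 (g * h) x = act7 g (act7 h x)) ?_ ?_ h
  · intro i j hij c g x
    have hd := sl_det g
    fin_cases i <;> fin_cases j
    · exact absurd rfl hij
    · have := act0_upper _ _ _ _ hd c x
      simpa [act7, Matrix.SpecialLinearGroup.transvection_coe, mul_add, Matrix.mul_apply,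
        Fin.sum_univ_two, Matrix.single_apply] using this
    · have := act0_lower _ _ _ _ hd c x
      simpa [act7, Matrix.SpecialLinearGroup.transvection_coe, mul_add, Matrix.mul_apply,
        Fin.sum_univ_two, Matrix.single_apply] using this
    · exact absurd rfl hij
  · intro A B hA hB g x
    rw [← mul_assoc, hB, hA, hB]

@[reducible] def act7Action : MulAction SL(2, ZMod 7) (ZMod 7) where
  smul := act7
  one_smul x := by
    change act7 1 x = x
    simp [act7, act0]
  mul_smul g h x := act7_mul h g x

def phi7 : SL(2, ZMod 7) →* Equiv.Perm (ZMod 7) :=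
  @MulAction.toPermHom _ _ _ act7Action

lemma phi7_apply (g : SL(2, ZMod 7)) (x : ZMod 7) : phi7 g x = act7 g x := rfl

def pt (x y : ZMod 7) : ZMod 7 := x + (![0, 3, 6, 1, 5, 4, 2] : Fin 7 → ZMod 7) (y - x)

def Fan (s : ZMod 7 → ZMod 7) : Prop :=
  s 0 ≠ s 1 ∧ s 0 ≠ s 2 ∧ s 1 ≠ s 2 ∧ s 2 ≠ pt (s 0) (s 1) ∧
  s 3 = pt (s 0) (s 1) ∧ s 4 = pt (s 1) (s 2) ∧ s 5 = pt (s 2) (s 3) ∧ s 6 = pt (s 3) (s 4)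

instance (s : ZMod 7 → ZMod 7) : Decidable (Fan s) := by unfold Fan; infer_instance

lemma Fan.ext {s s' : ZMod 7 → ZMod 7} (h : Fan s) (h' : Fan s')
    (h0 : s 0 = s' 0) (h1 : s 1 = s' 1) (h2 : s 2 = s' 2) : ∀ x, s x = s' x := by
  obtain ⟨-, -, -, -, a3, a4, a5, a6⟩ := h
  obtain ⟨-, -, -, -, b3, b4, b5, b6⟩ := h'
  have h3 : s 3 = s' 3 := by rw [a3, b3, h0, h1]
  have h4 : s 4 = s' 4 := by rw [a4, b4, h1, h2]
  have h5 : s 5 = s' 5 := by rw [a5, b5, h2, h3]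
  have h6 : s 6 = s' 6 := by rw [a6, b6, h3, h4]
  intro x
  fin_cases x <;> assumption

lemma fan_act0 : ∀ a b c d : ZMod 7, a * d - b * c = 1 → Fan (act0 a b c d) := by
  decide +kernel

lemma fan_phi7 (g : SL(2, ZMod 7)) : Fan (phi7 g) := fan_act0 _ _ _ _ (sl_det g)

lemma exists_act0 : ∀ x y z : ZMod 7, x ≠ y → x ≠ z → y ≠ z → z ≠ pt x y →
    ((∃ a b : ZMod 7, a ≠ 0 ∧ act0 a b 0 (a ^ 5) 0 = x ∧ act0 a b 0 (a ^ 5) 1 = y ∧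
      act0 a b 0 (a ^ 5) 2 = z) ∨
    (∃ c a d : ZMod 7, c ≠ 0 ∧ act0 a ((a * d - 1) * c ^ 5) c d 0 = x ∧
      act0 a ((a * d - 1) * c ^ 5) c d 1 = y ∧ act0 a ((a * d - 1) * c ^ 5) c d 2 = z)) := by
  decide +kernel

lemma pow6 : ∀ c : ZMod 7, c ≠ 0 → c * c ^ 5 = 1 := by decide

lemma exists_phi7 (x y z : ZMod 7) (h1 : x ≠ y) (h2 : x ≠ z) (h3 : y ≠ z) (h4 : z ≠ pt x y) :
    ∃ g, phi7 g 0 = x ∧ phi7 g 1 = y ∧ phi7 g 2 = z := by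
  rcases exists_act0 x y z h1 h2 h3 h4 with ⟨a, b, ha, h⟩ | ⟨c, a, d, hc, h⟩
  · refine ⟨⟨!![a, b; 0, a ^ 5], ?_⟩, h⟩
    rw [Matrix.det_fin_two_of, pow6 a ha]; ring
  · have hdet : (!![a, (a * d - 1) * c ^ 5; c, d]).det = 1 := by
      rw [Matrix.det_fin_two_of]
      linear_combination (-(a * d - 1)) * pow6 c hc
    exact ⟨⟨!![a, (a * d - 1) * c ^ 5; c, d], hdet⟩, h⟩

lemma card_range_le : Nat.card phi7.range ≤ 168 := by
  let Tr := {p : ZMod 7 × ZMod 7 × ZMod 7 // p.1 ≠ p.2.1 ∧ p.1 ≠ p.2.2 ∧ p.2.1 ≠ p.2.2 ∧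
    p.2.2 ≠ pt p.1 p.2.1}
  have hc : Nat.card Tr = 168 := by
    rw [Nat.card_eq_fintype_card]
    decide +kernel
  have hfan : ∀ σ : phi7.range, Fan σ.1 := by
    rintro ⟨_, g, rfl⟩
    exact fan_phi7 g
  let F : phi7.range → Tr := fun σ => ⟨(σ.1 0, σ.1 1, σ.1 2),
    (hfan σ).1, (hfan σ).2.1, (hfan σ).2.2.1, (hfan σ).2.2.2.1⟩
  rw [← hc]
  refine Nat.card_le_card_of_injective F ?_
  intro σ τ h
  have h' := congrArg Subtype.val h
  simp only [F, Prod.mk.injEq] at h'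
  exact Subtype.ext (Equiv.ext ((hfan σ).ext (hfan τ) h'.1 h'.2.1 h'.2.2))

lemma simple7 : IsSimpleGroup PSL(2, ZMod 7) :=
  Matrix.ProjectiveSpecialLinearGroup.rank_two_simple (by simp)

lemma range_equiv : Nonempty (phi7.range ≃* PSL(2, ZMod 7)) := by
  have := simple7
  have hle : Subgroup.center (SL(2, ZMod 7)) ≤ phi7.ker := by
    intro A hA
    obtain ⟨r, hr, hA⟩ := Matrix.SpecialLinearGroup.mem_center_iff.1 hA
    rw [MonoidHom.mem_ker]
    ext x
    have hr' : r * r = 1 := by simpa [pow_two] using hr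
    have e : ∀ i j, A i j = Matrix.scalar (Fin 2) r i j := fun i j => by rw [hA]
    simp [phi7_apply, act7, act0, e, hr']
  let ψ : PSL(2, ZMod 7) →* Equiv.Perm (ZMod 7) := QuotientGroup.lift _ phi7 hle
  have hrange : ψ.range = phi7.range := by
    ext σ
    constructor
    · rintro ⟨q, rfl⟩
      obtain ⟨g, rfl⟩ := QuotientGroup.mk_surjective q
      exact ⟨g, rfl⟩
    · rintro ⟨g, rfl⟩
      exact ⟨(g : PSL(2, ZMod 7)), rfl⟩
  have hinj : Function.Injective ψ := by
    rw [← MonoidHom.ker_eq_bot_iff]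
    rcases IsSimpleGroup.eq_bot_or_eq_top_of_normal ψ.ker inferInstance with h | h
    · exact h
    · exfalso
      obtain ⟨g, hg, -⟩ := exists_phi7 1 2 3 (by decide) (by decide) (by decide) (by decide)
      have : ((g : PSL(2, ZMod 7))) ∈ ψ.ker := by rw [h]; trivial
      have h2 : phi7 g = 1 := this
      rw [h2] at hg
      exact absurd hg (by decide)
  exact ⟨((MonoidHom.ofInjective hinj).trans (MulEquiv.subgroupCongr hrange)).symm⟩

lemma pt_of_line : ∀ x y z j : ZMod 7, ({x, y, z} : Finset (ZMod 7)) = {j, j + 1, j + 3} →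
    z = pt x y := by decide +kernel

lemma transv_pow (i j : Fin 2) (h : i ≠ j) (c : ZMod 7) (n : ℕ) :
    (Matrix.SpecialLinearGroup.transvection h c) ^ n =
      Matrix.SpecialLinearGroup.transvection h (n * c) := by
  induction n with
  | zero =>
    ext a b
    simp [Matrix.SpecialLinearGroup.transvection_coe]
  | succ n ih =>
    rw [pow_succ, ih]
    ext a b
    have hm : (Matrix.single i j ((n : ZMod 7) * c)) * (Matrix.single i j c) = 0 :=
      Matrix.single_mul_single_of_ne _ _ _ _ h.symm _
    simp only [Matrix.SpecialLinearGroup.coe_mul, Matrix.SpecialLinearGroup.transvection_coe]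
    rw [mul_add, add_mul, add_mul, hm]
    simp only [mul_one, one_mul, add_zero, Nat.cast_add, Nat.cast_one, add_mul,
      Matrix.single_add, add_assoc]

lemma fano_case (H : Subgroup (Equiv.Perm (ZMod 7))) (h56 : 56 ∣ Nat.card H)
    (hF : ∀ σ ∈ H, ∀ i : ZMod 7, ∃ j : ZMod 7,
      ({σ i, σ (i + 1), σ (i + 3)} : Finset (ZMod 7)) = {j, j + 1, j + 3}) :
    Nonempty (H ≃* PSL(2, ZMod 7)) := by
  have hle : H ≤ phi7.range := by
    intro σ hσ
    have hl : ∀ i, σ (i + 3) = pt (σ i) (σ (i + 1)) := fun i => by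
      obtain ⟨j, hj⟩ := hF σ hσ i
      exact pt_of_line _ _ _ _ hj
    have hfan : Fan σ := by
      refine ⟨fun h => ?_, fun h => ?_, fun h => ?_, fun h => ?_, hl 0, hl 1, hl 2, hl 3⟩
      · exact absurd (σ.injective h) (by decide)
      · exact absurd (σ.injective h) (by decide)
      · exact absurd (σ.injective h) (by decide)
      · exact absurd (σ.injective (h.trans (hl 0).symm)) (by decide)
    obtain ⟨g, g0, g1, g2⟩ := exists_phi7 _ _ _ hfan.1 hfan.2.1 hfan.2.2.1 hfan.2.2.2.1
    exact ⟨g, Equiv.ext ((fan_phi7 g).ext hfan g0 g1 g2)⟩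
  have hidx : (H.comap phi7).index ≤ 3 := by
    rw [Subgroup.index_comap]
    have h1 := Subgroup.card_mul_index (H.subgroupOf phi7.range)
    rw [Nat.card_congr (Subgroup.subgroupOfEquivOfLe hle).toEquiv] at h1
    change _ * H.relIndex phi7.range = _ at h1
    have h2 := card_range_le
    have h3 : 0 < Nat.card H := Nat.card_pos
    have h4 := Nat.le_of_dvd h3 h56
    nlinarith
  have htop : H.comap phi7 = ⊤ := by
    rw [eq_top_iff]
    intro g _
    refine Matrix.SL2.transvection_induction (F := ZMod 7) (P := fun h => h ∈ H.comap phi7) ?_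
      (fun A B hA hB => mul_mem hA hB) g
    intro i j hij c
    obtain ⟨n, hn0, hn, hmem⟩ := Subgroup.exists_pow_mem_of_index_ne_zero
      (H := H.comap phi7) Subgroup.index_ne_zero_of_finite
      (Matrix.SpecialLinearGroup.transvection hij c)
    have hn3 : n ≤ 3 := hn.trans hidx
    have : ∃ m : ℕ, ((m * n : ℕ) : ZMod 7) = 1 := by
      interval_cases n
      · exact ⟨1, by decide⟩
      · exact ⟨4, by decide⟩
      · exact ⟨5, by decide⟩
    obtain ⟨m, hm⟩ := this
    have h1 := pow_mem hmem m
    rw [← pow_mul, mul_comm n m, transv_pow, hm, one_mul] at h1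
    exact h1
  have hge : phi7.range ≤ H := by
    rintro _ ⟨g, rfl⟩
    have : g ∈ H.comap phi7 := by rw [htop]; trivial
    exact this
  rw [le_antisymm hle hge]
  exact range_equiv

def Cons (x y z : ZMod 7) : Prop := ∃ j : ZMod 7, ({x, y, z} : Finset (ZMod 7)) = {j, j + 1, j + 2}

instance (x y z : ZMod 7) : Decidable (Cons x y z) := by unfold Cons; infer_instance

lemma cons_chain : ∀ a b c : ZMod 7, Cons a b c → ∀ d, Cons b c d → a ≠ d →
    ∀ e, Cons c d e → a ≠ e → b ≠ e → ∀ f, Cons d e f → a ≠ f → b ≠ f → c ≠ f →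
    c = 2 * b - a ∧ d = 2 * c - b ∧ e = 2 * d - c ∧ f = 2 * e - d := by
  decide +kernel

lemma cons_case (H : Subgroup (Equiv.Perm (ZMod 7))) (h56 : 56 ∣ Nat.card H)
    (hF : ∀ σ ∈ H, ∀ i : ZMod 7, ∃ j : ZMod 7,
      ({σ i, σ (i + 1), σ (i + 2)} : Finset (ZMod 7)) = {j, j + 1, j + 2}) : False := by
  have hs : ∀ σ ∈ H, σ 2 = 2 * σ 1 - σ 0 ∧ σ 3 = 2 * σ 2 - σ 1 ∧ σ 4 = 2 * σ 3 - σ 2 ∧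
      σ 5 = 2 * σ 4 - σ 3 := by
    intro σ hσ
    have hne : ∀ i j, i ≠ j → σ i ≠ σ j := fun i j h h' => h (σ.injective h')
    exact cons_chain _ _ _ (hF σ hσ 0) _ (hF σ hσ 1) (hne _ _ (by decide)) _ (hF σ hσ 2)
      (hne _ _ (by decide)) (hne _ _ (by decide)) _ (hF σ hσ 3)
      (hne _ _ (by decide)) (hne _ _ (by decide)) (hne _ _ (by decide))
  let F : H → ZMod 7 × ZMod 7 := fun σ => (σ.1 0, σ.1 1)
  have hinj : Function.Injective F := by
    intro σ τ h
    simp only [F, Prod.mk.injEq] at h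
    obtain ⟨h0, h1⟩ := h
    obtain ⟨a2, a3, a4, a5⟩ := hs σ.1 σ.2
    obtain ⟨b2, b3, b4, b5⟩ := hs τ.1 τ.2
    have h2 : σ.1 2 = τ.1 2 := by rw [a2, b2, h0, h1]
    have h3 : σ.1 3 = τ.1 3 := by rw [a3, b3, h2, h1]
    have h4 : σ.1 4 = τ.1 4 := by rw [a4, b4, h2, h3]
    have h5 : σ.1 5 = τ.1 5 := by rw [a5, b5, h4, h3]
    have h6 : σ.1 6 = τ.1 6 := by
      have e : ∀ i : ZMod 7, i ≠ 6 → σ.1 i = τ.1 i := by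
        intro i hi
        fin_cases i
        · exact h0
        · exact h1
        · exact h2
        · exact h3
        · exact h4
        · exact h5
        · exact absurd rfl hi
      by_contra hne
      obtain ⟨i, hi⟩ := τ.1.surjective (σ.1 6)
      by_cases h : i = 6
      · rw [h] at hi; exact hne hi.symm
      · rw [← e i h] at hi
        exact h (σ.1.injective hi)
    refine Subtype.ext (Equiv.ext fun i => ?_)
    fin_cases i
    · exact h0
    · exact h1
    · exact h2
    · exact h3
    · exact h4
    · exact h5
    · exact h6
  have h1 := Nat.card_le_card_of_injective F hinj
  rw [Nat.card_prod, Nat.card_zmod] at h1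
  have h4 := Nat.le_of_dvd Nat.card_pos h56
  omega

lemma classify : ∀ x y : ZMod 7, x ≠ 0 → y ≠ 0 → x ≠ y → ∃ k c : ZMod 7, k ≠ 0 ∧
    (({c, k * x + c, k * y + c} : Finset (ZMod 7)) = {0, 1, 3} ∨
     ({c, k * x + c, k * y + c} : Finset (ZMod 7)) = {0, 1, 2}) := by
  decide +kernel

lemma exists_label {Ω : Type*} [Fintype Ω] [DecidableEq Ω] (hΩ : Fintype.card Ω = 7)
    (ρ : Equiv.Perm Ω) (hρ : orderOf ρ = 7) (p : Ω) :
    ∃ e : ZMod 7 ≃ Ω, e 0 = p ∧ ∀ i k : ZMod 7, (ρ ^ k.val) (e i) = e (i + k) := by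
  have hp7 : ρ ^ 7 = 1 := hρ ▸ pow_orderOf_eq_one ρ
  -- all points are moved
  have hcyc : ρ.IsCycle := Equiv.Perm.isCycle_of_prime_order' (by rw [hρ]; norm_num)
    (by rw [hΩ, hρ]; norm_num)
  have hsupp : ρ.support = Finset.univ := by
    rw [← Finset.card_eq_iff_eq_univ, ← hcyc.orderOf, hρ, hΩ]
  have hmod : ∀ n : ℕ, ρ ^ (n % 7) = ρ ^ n := fun n => by
    rw [← hρ]; exact pow_mod_orderOf ρ n
  let F : ZMod 7 → Ω := fun i => (ρ ^ i.val) p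
  have hadd : ∀ i k : ZMod 7, (ρ ^ k.val) (F i) = F (i + k) := by
    intro i k
    simp only [F]
    rw [ZMod.val_add, hmod, add_comm, pow_add, Equiv.Perm.mul_apply]
  have hsurj : Function.Surjective F := by
    intro q
    have h1 : ρ p ≠ p := by
      rw [← Equiv.Perm.mem_support, hsupp]; exact Finset.mem_univ _
    have h2 : ρ q ≠ q := by
      rw [← Equiv.Perm.mem_support, hsupp]; exact Finset.mem_univ _
    obtain ⟨n, hn⟩ := hcyc.exists_pow_eq h1 h2
    refine ⟨(n : ZMod 7), ?_⟩
    simp only [F]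
    rw [ZMod.val_natCast, hmod, hn]
  have hbij : Function.Bijective F := by
    rw [Fintype.bijective_iff_surjective_and_card]
    exact ⟨hsurj, by rw [hΩ, ZMod.card]⟩
  refine ⟨Equiv.ofBijective F hbij, ?_, hadd⟩
  simp [F]

theorem comb {Ω : Type*} [Fintype Ω] [DecidableEq Ω] (hΩ : Fintype.card Ω = 7)
    (H : Subgroup (Equiv.Perm Ω)) (h56 : 56 ∣ Nat.card H) (Ls : Finset (Finset Ω))
    (hc : Ls.card = 7) (h3 : ∀ T ∈ Ls, T.card = 3)
    (hst : ∀ σ ∈ H, ∀ T ∈ Ls, T.image σ ∈ Ls) : Nonempty (H ≃* PSL(2, ZMod 7)) := by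
  obtain ⟨⟨ρ, hρH⟩, hρ⟩ := exists_prime_orderOf_dvd_card' (G := H) 7
    (dvd_trans (by norm_num) h56)
  rw [Subgroup.orderOf_mk] at hρ
  obtain ⟨T, hT⟩ : Ls.Nonempty := by rw [← Finset.card_pos, hc]; norm_num
  obtain ⟨p, q, r, hpq, hpr, hqr, hTe⟩ := Finset.card_eq_three.1 (h3 T hT)
  obtain ⟨e, he0, hek⟩ := exists_label hΩ ρ hρ p
  obtain ⟨x, rfl⟩ := e.surjective q
  obtain ⟨y, rfl⟩ := e.surjective r
  have hx : x ≠ 0 := by rintro rfl; exact hpq he0.symm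
  have hy : y ≠ 0 := by rintro rfl; exact hpr he0.symm
  have hxy : x ≠ y := by rintro rfl; exact hqr rfl
  obtain ⟨k, c, hk, hS⟩ := classify x y hx hy hxy
  -- the new labelling
  let e' : ZMod 7 ≃ Ω := ((Equiv.subRight c).trans (Equiv.mulLeft₀ k⁻¹ (inv_ne_zero hk))).trans e
  have he' : ∀ i, e' i = e (k⁻¹ * (i - c)) := fun i => rfl
  have hTe' : T = ({c, k * x + c, k * y + c} : Finset (ZMod 7)).image e' := by
    rw [hTe]
    simp [Finset.image_insert, he', hk, he0]
  have hshift : ∀ i j : ZMod 7, (ρ ^ (k⁻¹ * j).val) (e' i) = e' (i + j) := by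
    intro i j
    rw [he', hek, he']
    congr 1
    ring
  have main : ∀ S : Finset (ZMod 7), T = S.image e' →
      (∀ i j : ZMod 7, S.image (· + i) = S.image (· + j) → i = j) →
      ∀ σ ∈ H.map (e'.symm.permCongrHom).toMonoidHom, ∀ i : ZMod 7, ∃ j : ZMod 7,
        (S.image (· + i)).image σ = S.image (· + j) := by
    intro S hTS hSinj
    have hmem : ∀ i : ZMod 7, (S.image (· + i)).image e' ∈ Ls := by
      intro i
      have := hst (ρ ^ (k⁻¹ * i).val) (pow_mem hρH _) T hT
      rw [hTS] at this
      convert this using 1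
      rw [Finset.image_image, Finset.image_image]
      congr 1
      ext a
      exact (hshift a i).symm
    have hall : (Finset.univ.image fun i : ZMod 7 => (S.image (· + i)).image e') = Ls := by
      refine Finset.eq_of_subset_of_card_le ?_ ?_
      · intro U hU
        obtain ⟨i, -, rfl⟩ := Finset.mem_image.1 hU
        exact hmem i
      · rw [hc, Finset.card_image_of_injective, Finset.card_univ, ZMod.card]
        intro i j hij
        exact hSinj i j (Finset.image_injective e'.injective hij)
    rintro _ ⟨σ, hσ, rfl⟩ i
    have h1 := hst σ hσ _ (hmem i)
    rw [← hall] at h1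
    obtain ⟨j, -, hj⟩ := Finset.mem_image.1 h1
    refine ⟨j, ?_⟩
    apply Finset.image_injective e'.injective
    rw [hj]
    generalize Finset.image (fun x => x + i) S = S'
    rw [Finset.image_image, Finset.image_image]
    refine Finset.image_congr fun a _ => ?_
    simp [Equiv.permCongrHom]
  have heq : Nonempty (H ≃* H.map (e'.symm.permCongrHom).toMonoidHom) :=
    ⟨H.equivMapOfInjective _ (e'.symm.permCongrHom).injective⟩
  obtain ⟨E⟩ := heq
  have h56' : 56 ∣ Nat.card (H.map (e'.symm.permCongrHom).toMonoidHom) := by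
    rw [← Nat.card_congr E.toEquiv]; exact h56
  rcases hS with hS | hS
  · rw [hS] at hTe'
    have m := main _ hTe' (by decide +kernel)
    obtain ⟨E'⟩ := fano_case _ h56' (fun σ hσ i => by
      obtain ⟨j, hj⟩ := m σ hσ i
      refine ⟨j, ?_⟩
      simpa [Finset.image_insert, add_comm] using hj)
    exact ⟨E.trans E'⟩
  · rw [hS] at hTe'
    have m := main _ hTe' (by decide +kernel)
    exact (cons_case _ h56' (fun σ hσ i => by
      obtain ⟨j, hj⟩ := m σ hσ i
      refine ⟨j, ?_⟩
      simpa [Finset.image_insert, add_comm] using hj)).elim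


section assembly

variable {Ω : Type*} [Field Ω] [CharZero Ω] [Algebra ℚ Ω]

lemma mem_ra (x : Ω) : x ∈ f13a.rootSet Ω ↔ x ^ 7 - 7 * x + 3 = 0 := by
  rw [mem_rootSet]
  rw [and_iff_right irr_a.ne_zero]
  simp [f13a, map_ofNat]

lemma mem_rb (t : Ω) : t ∈ f13b.rootSet Ω ↔
    t^8 - 4*t^7 + 7*t^6 - 7*t^5 + 7*t^4 - 7*t^3 + 7*t^2 + 5*t + 1 = 0 := by
  rw [mem_rootSet]
  rw [and_iff_right irr_b.ne_zero]
  simp [f13b, map_ofNat]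

lemma mem_rg (b : Ω) : b ∈ gpol.rootSet Ω ↔ gval b = 0 := by
  rw [mem_rootSet]
  rw [and_iff_right irr_g.ne_zero]
  simp [gpol, gval, map_ofNat]

lemma deg_a : f13a.natDegree = 7 := by unfold f13a; compute_degree!
lemma deg_b : f13b.natDegree = 8 := by unfold f13b; compute_degree!
lemma deg_g : gpol.natDegree = 7 := by unfold gpol; compute_degree!

lemma dd_ne (b : Ω) (hb : gval b = 0) : dd b ≠ 0 := by
  intro h
  let q : ℚ[X] := C (-1974) + C 5929 * X + C 5502 * X ^ 2 + C (-10528/3) * X ^ 3 +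
    C (-861) * X ^ 4 + C 546 * X ^ 5 + C (-1043/3) * X ^ 6
  have hq : aeval b q = 0 := by
    rw [← h]
    simp [q, dd]
  have hdq : q.natDegree = 6 := by simp only [q]; compute_degree!
  have hg : aeval b gpol = 0 := (mem_rootSet.1 ((mem_rg b).2 hb)).2
  have hdvd : gpol ∣ q := by
    rcases (EuclideanDomain.dvd_or_coprime gpol q irr_g) with h | ⟨u, v, h⟩
    · exact h
    · have := congrArg (aeval b) h
      simp [hg, hq] at this
  have := natDegree_le_of_dvd hdvd (by rintro h0; rw [h0] at hdq; simp at hdq)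
  rw [hdq, deg_g] at this
  omega

variable [IsAlgClosed Ω]

lemma cubic (b : Ω) (hb : gval b = 0) : ∃ x y z : Ω, b = x + y + z ∧
    (∀ t : Ω, t^3 - b*t^2 + p2 b * t - p3 b = (t - x) * (t - y) * (t - z)) ∧
    ((x - y) * (x - z) * (y - z)) ^ 2 = dd b := by
  let P : Cubic Ω := ⟨1, -b, p2 b, - p3 b⟩
  have ha : P.a ≠ 0 := one_ne_zero
  obtain ⟨x, y, z, h3⟩ := (Cubic.splits_iff_roots_eq_three (φ := RingHom.id Ω) ha).1
    (IsAlgClosed.splits _)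
  have e1 : -b = 1 * -(x + y + z) := Cubic.b_eq_three_roots ha h3
  have e2 : p2 b = 1 * (x * y + x * z + y * z) := Cubic.c_eq_three_roots ha h3
  have e3 : -p3 b = 1 * -(x * y * z) := Cubic.d_eq_three_roots ha h3
  have e1' : b = x + y + z := by linear_combination -e1
  have e2' : p2 b = x * y + x * z + y * z := by linear_combination e2
  have e3' : p3 b = x * y * z := by linear_combination -e3
  refine ⟨x, y, z, e1', fun t => ?_, ?_⟩
  · rw [e2', e3']
    linear_combination (-t^2) * e1'
  · rw [← disc_id b hb, e2', e3', e1']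
    ring

lemma cubic_root (b x : Ω) (hb : gval b = 0) (h : x^3 - b*x^2 + p2 b * x - p3 b = 0) :
    x ∈ f13a.rootSet Ω := by
  rw [mem_ra, fac_id b x hb, h, zero_mul]

lemma cards (p : ℚ[X]) (hp : Irreducible p) : Fintype.card (p.rootSet Ω) = p.natDegree :=
  card_rootSet_eq_natDegree hp.separable (IsAlgClosed.splits _)

lemma vv_sep (s t : Ω) (h : ∀ b : Ω, gval b = 0 → vv b s = vv b t) : s = t := by
  let q : Polynomial Ω := C (vc0 s - vc0 t) + C (vc1 s - vc1 t) * X + C (vc2 s - vc2 t) * X ^ 2 +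
    C (vc3 s - vc3 t) * X ^ 3 + C (vc4 s - vc4 t) * X ^ 4 + C (vc5 s - vc5 t) * X ^ 5 +
    C (vc6 s - vc6 t) * X ^ 6
  have hd : q.natDegree ≤ 6 := by simp only [q]; compute_degree
  have hq : q = 0 := by
    refine Polynomial.eq_zero_of_natDegree_lt_card_of_eval_eq_zero q
      (f := ((↑) : gpol.rootSet Ω → Ω)) Subtype.val_injective ?_ ?_
    · intro b
      have := h b ((mem_rg _).1 b.2)
      simp only [vv] at this
      simp only [q, eval_add, eval_mul, eval_pow, eval_X, eval_C]
      linear_combination this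
    · rw [cards gpol irr_g, deg_g]; omega
  have hc : ∀ n, q.coeff n = 0 := fun n => by rw [hq, coeff_zero]
  have c0 : vc0 s - vc0 t = 0 := by simpa [q, coeff_X, coeff_X_pow, -map_sub, -C_sub] using hc 0
  have c1 : vc1 s - vc1 t = 0 := by simpa [q, coeff_X, coeff_X_pow, -map_sub, -C_sub] using hc 1
  have c2 : vc2 s - vc2 t = 0 := by simpa [q, coeff_X, coeff_X_pow, -map_sub, -C_sub] using hc 2
  have c3 : vc3 s - vc3 t = 0 := by simpa [q, coeff_X, coeff_X_pow, -map_sub, -C_sub] using hc 3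
  have c4 : vc4 s - vc4 t = 0 := by simpa [q, coeff_X, coeff_X_pow, -map_sub, -C_sub] using hc 4
  have c5 : vc5 s - vc5 t = 0 := by simpa [q, coeff_X, coeff_X_pow, -map_sub, -C_sub] using hc 5
  have c6 : vc6 s - vc6 t = 0 := by simpa [q, coeff_X, coeff_X_pow, -map_sub, -C_sub] using hc 6
  have hs := vv_lin s
  have ht := vv_lin t
  linear_combination ht - hs + ((-1/189))*c0 + ((-1/126))*c1 + ((5/252))*c2 + ((1/18))*c3 +
    ((5/252))*c4 + ((-4/9))*c5 + ((-277/252))*c6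

lemma map_vv (σ : Ω ≃ₐ[ℚ] Ω) (b t : Ω) : σ (vv b t) = vv (σ b) (σ t) := by
  simp [vv, vc0, vc1, vc2, vc3, vc4, vc5, vc6, map_ofNat]

lemma map_p2 (σ : Ω ≃ₐ[ℚ] Ω) (b : Ω) : σ (p2 b) = p2 (σ b) := by simp [p2, map_ofNat]
lemma map_p3 (σ : Ω ≃ₐ[ℚ] Ω) (b : Ω) : σ (p3 b) = p3 (σ b) := by simp [p3, map_ofNat]

abbrev La (Ω : Type*) [Field Ω] [Algebra ℚ Ω] : IntermediateField ℚ Ω :=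
  IntermediateField.adjoin ℚ (f13a.rootSet Ω)

lemma root_mem [IsGalois ℚ Ω] (t : Ω) (ht : t ∈ f13b.rootSet Ω) : t ∈ La Ω := by
  rw [← InfiniteGalois.fixedField_fixingSubgroup (La Ω), IntermediateField.mem_fixedField_iff]
  intro σ hσ
  have hfix : ∀ x ∈ La Ω, σ x = x := by
    intro x hx
    exact (IntermediateField.mem_fixingSubgroup_iff _ _).1 hσ x hx
  apply vv_sep
  intro b hb
  obtain ⟨x, y, z, h1, h2, h3⟩ := cubic b hb
  have hx : x ∈ La Ω := IntermediateField.subset_adjoin _ _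
    (cubic_root b x hb (by rw [h2]; ring))
  have hy : y ∈ La Ω := IntermediateField.subset_adjoin _ _
    (cubic_root b y hb (by rw [h2]; ring))
  have hz : z ∈ La Ω := IntermediateField.subset_adjoin _ _
    (cubic_root b z hb (by rw [h2]; ring))
  have hbL : σ b = b := by
    rw [h1, map_add, map_add, hfix x hx, hfix y hy, hfix z hz]
  have hsq : (vv b t) ^ 2 = (63 * ((x - y) * (x - z) * (y - z))) ^ 2 := by
    rw [vv_sq b t hb ((mem_rb t).1 ht), mul_pow, h3]; norm_num
  have hv : σ (vv b t) = vv b t := by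
    rcases sq_eq_sq_iff_eq_or_eq_neg.1 hsq with h | h <;> rw [h] <;>
      simp [hfix x hx, hfix y hy, hfix z hz, map_ofNat]
  rw [map_vv, hbL] at hv
  exact hv

lemma deg_dvd {L : Type*} [Field L] [Algebra ℚ L] [FiniteDimensional ℚ L] (p : ℚ[X])
    (hp : Irreducible p) (x : L) (hx : aeval x p = 0) : p.natDegree ∣ Module.finrank ℚ L := by
  have h := minpoly.eq_of_irreducible hp hx
  have h2 := minpoly.degree_dvd (K := ℚ) (x := x) (.of_finite ℚ x)
  rwa [← h, natDegree_mul_C (inv_ne_zero (leadingCoeff_ne_zero.2 hp.ne_zero))] at h2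

attribute [local instance 5000] IntermediateField.algebra' AlgebraicClosure.instAlgebra

lemma split_a : (f13a.map (algebraMap ℚ Ω)).Splits := IsAlgClosed.splits _

instance spl_a : IsSplittingField ℚ (La Ω) f13a :=
  IntermediateField.adjoin_rootSet_isSplittingField (IsAlgClosed.splits _)

lemma exists_root (p : ℚ[X]) (hp : Irreducible p) : ∃ x : Ω, x ∈ p.rootSet Ω := by
  have h := cards (Ω := Ω) p hp
  have h2 : 0 < Fintype.card (p.rootSet Ω) := by rw [h]; exact hp.natDegree_pos
  obtain ⟨x⟩ := Fintype.card_pos_iff.1 h2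
  exact ⟨x.1, x.2⟩

lemma dvd56 [IsGalois ℚ Ω] : 56 ∣ Module.finrank ℚ (La Ω) := by
  have hfin := IsSplittingField.finiteDimensional (La Ω) f13a
  obtain ⟨x, hx⟩ := exists_root (Ω := Ω) _ irr_a
  obtain ⟨t, ht⟩ := exists_root (Ω := Ω) _ irr_b
  have key : ∀ (p : ℚ[X]) (y : Ω) (hy : y ∈ La Ω), aeval y p = 0 →
      aeval (⟨y, hy⟩ : La Ω) p = 0 := by
    intro p y hy h
    have h2 := aeval_algHom_apply (La Ω).val (⟨y, hy⟩ : La Ω) p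
    have h3 : (La Ω).val (aeval (⟨y, hy⟩ : La Ω) p) = 0 := h2.symm.trans h
    exact Subtype.ext h3
  have h7 := deg_dvd f13a irr_a _
    (key f13a x (IntermediateField.subset_adjoin _ _ hx) (mem_rootSet.1 hx).2)
  have h8 := deg_dvd f13b irr_b _ (key f13b t (root_mem t ht) (mem_rootSet.1 ht).2)
  rw [deg_a] at h7
  rw [deg_b] at h8
  exact Nat.Coprime.mul_dvd_of_dvd_of_dvd (m := 7) (n := 8) (by norm_num) h7 h8

open Classical in
def Tb (b : Ω) : Finset (f13a.rootSet Ω) :=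
  Finset.univ.filter fun x => (x : Ω) ^ 3 - b * (x : Ω) ^ 2 + p2 b * x - p3 b = 0

lemma Tb_spec (b : Ω) (hb : gval b = 0) : (Tb b).card = 3 ∧ ∑ x ∈ Tb b, (x : Ω) = b := by
  classical
  obtain ⟨x, y, z, h1, h2, h3⟩ := cubic b hb
  have hd := dd_ne b hb
  rw [← h3] at hd
  have hxy : x ≠ y := by rintro rfl; simp at hd
  have hxz : x ≠ z := by rintro rfl; simp at hd
  have hyz : y ≠ z := by rintro rfl; simp at hd
  have hx := cubic_root b x hb (by rw [h2]; ring)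
  have hy := cubic_root b y hb (by rw [h2]; ring)
  have hz := cubic_root b z hb (by rw [h2]; ring)
  have hT : Tb b = {⟨x, hx⟩, ⟨y, hy⟩, ⟨z, hz⟩} := by
    ext ⟨w, hw⟩
    simp [Tb, h2, sub_eq_zero, or_assoc]
  rw [hT]
  constructor
  · rw [Finset.card_eq_three]
    exact ⟨_, _, _, by simpa using hxy, by simpa using hxz, by simpa using hyz, rfl⟩
  · rw [Finset.sum_insert (by simp [hxy, hxz]), Finset.sum_insert (by simp [hyz]),
      Finset.sum_singleton, h1, add_assoc]

lemma gal_a [IsGalois ℚ Ω] : Nonempty (f13a.Gal ≃* PSL(2, ZMod 7)) := by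
  classical
  have : Fact ((f13a.map (algebraMap ℚ Ω)).Splits) := ⟨split_a⟩
  let Φ := Polynomial.Gal.galActionHom f13a Ω
  have hΦ : Function.Injective Φ := Polynomial.Gal.galActionHom_injective f13a Ω
  let E : f13a.Gal ≃* Φ.range := MonoidHom.ofInjective hΦ
  have h56 : 56 ∣ Nat.card Φ.range := by
    rw [← Nat.card_congr E.toEquiv, Polynomial.Gal.card_of_separable irr_a.separable,
      (IsSplittingField.algEquiv (La Ω) f13a).toLinearEquiv.finrank_eq.symm]
    exact dvd56
  have hbv : ∀ b : gpol.rootSet Ω, gval (b : Ω) = 0 := fun b => (mem_rg _).1 b.2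
  obtain ⟨e⟩ := comb (by rw [cards f13a irr_a, deg_a]) Φ.range h56
    (Finset.univ.image fun b : gpol.rootSet Ω => Tb (b : Ω))
    (by
      rw [Finset.card_image_of_injective, Finset.card_univ, cards gpol irr_g, deg_g]
      intro b c hbc
      apply Subtype.ext
      rw [← (Tb_spec (b : Ω) (hbv b)).2, ← (Tb_spec (c : Ω) (hbv c)).2]
      simp only at hbc
      rw [hbc])
    (by
      intro T hT
      obtain ⟨b, -, rfl⟩ := Finset.mem_image.1 hT
      exact (Tb_spec (b : Ω) (hbv b)).1)
    (by
      rintro _ ⟨τ, rfl⟩ T hT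
      obtain ⟨b, -, rfl⟩ := Finset.mem_image.1 hT
      obtain ⟨φ, rfl⟩ := Polynomial.Gal.restrict_surjective f13a Ω τ
      have hgb : gval (φ (b : Ω)) = 0 := by
        have := congrArg φ (hbv b)
        simpa [gval, map_ofNat] using this
      refine Finset.mem_image.2 ⟨⟨φ b, (mem_rg _).2 hgb⟩, Finset.mem_univ _, ?_⟩
      symm
      refine Finset.eq_of_subset_of_card_le ?_ ?_
      · intro y hy
        obtain ⟨x, hx, rfl⟩ := Finset.mem_image.1 hy
        simp only [Tb, Finset.mem_filter, Finset.mem_univ, true_and] at hx ⊢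
        have h1 := congrArg φ hx
        rw [map_sub, map_add, map_sub, map_mul, map_mul, map_pow, map_pow, map_p2, map_p3,
          map_zero] at h1
        have h2 : ((Φ (Polynomial.Gal.restrict f13a Ω φ) x : f13a.rootSet Ω) : Ω) = φ x :=
          Polynomial.Gal.galActionHom_restrict f13a Ω φ x
        rw [h2]
        exact h1
      · rw [Finset.card_image_of_injective _ (Equiv.injective _), (Tb_spec _ hgb).1,
          (Tb_spec _ (hbv b)).1])
  exact ⟨E.trans e⟩

lemma spl_b [IsGalois ℚ Ω] : IsSplittingField ℚ (La Ω) f13b := by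
  have hfin := IsSplittingField.finiteDimensional (La Ω) f13a
  have hgal : IsGalois ℚ (La Ω) := IsGalois.of_separable_splitting_field irr_a.separable
  have hsp : (f13b.map (algebraMap ℚ (La Ω))).Splits :=
    IntermediateField.splits_of_splits (IsAlgClosed.splits _) fun t ht => root_mem t ht
  let E : IntermediateField ℚ (La Ω) := IntermediateField.adjoin ℚ (f13b.rootSet (La Ω))
  have hE : IsSplittingField ℚ E f13b := IntermediateField.adjoin_rootSet_isSplittingField hsp
  have hn : Normal ℚ E := Normal.of_isSplittingField f13b
  obtain ⟨e⟩ := gal_a (Ω := Ω)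
  let e' : Gal(La Ω/ℚ) ≃* PSL(2, ZMod 7) :=
    (AlgEquiv.autCongr (IsSplittingField.algEquiv (La Ω) f13a)).trans e
  have hs := simple7
  have hsimple : IsSimpleGroup Gal(La Ω/ℚ) :=
    e'.isSimpleGroup
  have hgE : IsGalois ℚ E := IsGalois.of_separable_splitting_field irr_b.separable
  have hnorm : E.fixingSubgroup.Normal := inferInstance
  rcases hnorm.eq_bot_or_eq_top with h | h
  · have htop : E = ⊤ := by
      rw [← IsGalois.fixedField_fixingSubgroup E, h, IntermediateField.fixedField_bot]
    rw [isSplittingField_iff_intermediateField]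
    exact ⟨hsp, htop⟩
  · exfalso
    have hbot : E = ⊥ := by
      rw [← IsGalois.fixedField_fixingSubgroup E, h, IsGalois.fixedField_top]
    have hf : Module.finrank ℚ E = 1 := by rw [hbot]; exact IntermediateField.finrank_bot
    obtain ⟨t, ht⟩ := hE.splits.exists_eval_eq_zero (by
      rw [degree_map]; intro h0; have := irr_b.degree_pos; rw [h0] at this
      exact lt_irrefl _ this)
    have := deg_dvd f13b irr_b t (by rwa [eval_map_algebraMap] at ht)
    rw [hf, deg_b] at this
    omega

lemma final_gen [IsGalois ℚ Ω] : Nonempty (f13a.SplittingField ≃ₐ[ℚ] f13b.SplittingField) ∧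
    Nonempty (f13a.Gal ≃* PSL(2, ZMod 7)) ∧ Nonempty (f13b.Gal ≃* PSL(2, ZMod 7)) := by
  have := spl_b (Ω := Ω)
  let A := IsSplittingField.algEquiv (La Ω) f13a
  let B := IsSplittingField.algEquiv (La Ω) f13b
  let C := A.symm.trans B
  obtain ⟨e⟩ := gal_a (Ω := Ω)
  have hA : Subsingleton (Algebra ℚ f13a.SplittingField) := inferInstance
  have hB : Subsingleton (Algebra ℚ f13b.SplittingField) := inferInstance
  refine ⟨⟨AlgEquiv.ofRingEquiv (f := C.toRingEquiv) ?_⟩, ⟨e⟩,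
    ⟨(AlgEquiv.autCongr C.symm).trans e⟩⟩
  intro r
  simp

end assembly

section closure

attribute [local instance 5000] AlgebraicClosure.instAlgebra

lemma final_Q : Nonempty (f13a.SplittingField ≃ₐ[ℚ] f13b.SplittingField) ∧
    Nonempty (f13a.Gal ≃* PSL(2, ZMod 7)) ∧ Nonempty (f13b.Gal ≃* PSL(2, ZMod 7)) := by
  have h : IsGalois ℚ (AlgebraicClosure ℚ) := {}
  exact final_gen (Ω := AlgebraicClosure ℚ)

end closure


/- The splitting field of an irreducible polynomial is the Galois closure of the number
field it defines, and `f.Gal` is its Galois group over `ℚ`. -/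
theorem stmt13 :
    Irreducible f13a ∧ Irreducible f13b ∧
    Nonempty (f13a.SplittingField ≃ₐ[ℚ] f13b.SplittingField) ∧
    Nonempty (f13a.Gal ≃* PSL(2, ZMod 7)) ∧
    Nonempty (f13b.Gal ≃* PSL(2, ZMod 7)) := by
  exact ⟨irr_a, irr_b, final_Q⟩

end
end

section
/- Let N/ℚ be a Galois extension of number fields with Gal(N/ℚ) isomorphic to the alternating group A₅ or to the symmetric group S₅. If K₅ ⊆ N is a subfield of degree 5 over ℚ and K₆ ⊆ N is a subfield of degree 6 over ℚ (so that N is the Galois closure of each), then the ratio D_{K₆}/D_{K₅} is the square of an integer: there exists a nonzero integer r with D_{K₆} = D_{K₅}·r². -/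
open scoped NumberField

namespace S16

open Equiv

def cyc (i : Fin 6) : Perm (Fin 5) :=
  match i with
  | 0 => c[0,1,2,3,4]
  | 1 => c[0,1,2,4,3]
  | 2 => c[0,1,3,2,4]
  | 3 => c[0,1,3,4,2]
  | 4 => c[0,1,4,2,3]
  | 5 => c[0,1,4,3,2]

lemma cyc_sign (i) : Perm.sign (cyc i) = 1 := by revert i; decide +kernel
lemma cyc_pow (i) : cyc i ^ 5 = 1 := by revert i; decide +kernel
lemma cyc_ne (i) : cyc i ≠ 1 := by revert i; decide +kernel
lemma cyc_inj : ∀ i j, ∀ k : Fin 5, cyc i = cyc j ^ (k : ℕ) → i = j := by decide +kernel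

set_option maxRecDepth 100000 in
lemma key : ∀ g : Perm (Fin 5),
    (Finset.univ.filter fun i : Fin 6 => ∃ k : Fin 5, ∀ x, g (cyc i x) = (cyc i ^ (k:ℕ)) (g x)).card
      ≤ (Finset.univ.filter fun x : Fin 5 => g x = x).card + 1 := by
  decide +kernel
set_option maxRecDepth 100000 in
lemma key2 : 
    (Finset.univ.filter fun i : Fin 6 => ∃ k : Fin 5, ∀ x, swap (0 : Fin 5) 1 (cyc i x) = (cyc i ^ (k:ℕ)) (swap (0: Fin 5) 1 x)).card
      = 0 := by
  decide +kernel

lemma syl {H : Type*} [Group H] [Finite H] (hc : Nat.card H = 10 ∨ Nat.card H = 20) (a b : H)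
    (ha : orderOf a = 5) (hb : orderOf b = 5) : ∃ k : Fin 5, b = a ^ (k : ℕ) := by
  have : Fact (Nat.Prime 5) := ⟨by norm_num⟩
  have hf : (Nat.card H).factorization 5 = 1 := by
    rcases hc with h | h <;> rw [h, Nat.factorization_def _ (by norm_num)]
    · rw [show (10:ℕ) = 5 * 2 by norm_num, padicValNat.mul (by norm_num) (by norm_num)]
      simp [padicValNat.eq_zero_of_not_dvd]
    · rw [show (20:ℕ) = 5 * 4 by norm_num, padicValNat.mul (by norm_num) (by norm_num)]
      simp [padicValNat.eq_zero_of_not_dvd]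
  have h1 : Nat.card (Subgroup.zpowers a) = 5 ^ (Nat.card H).factorization 5 := by
    rw [Nat.card_zpowers, ha, hf, pow_one]
  have h2 : Nat.card (Subgroup.zpowers b) = 5 ^ (Nat.card H).factorization 5 := by
    rw [Nat.card_zpowers, hb, hf, pow_one]
  let A := Sylow.ofCard (p := 5) (Subgroup.zpowers a) h1
  let B := Sylow.ofCard (p := 5) (Subgroup.zpowers b) h2
  have hn : Nat.card (Sylow 5 H) = 1 := by
    have m := card_sylow_modEq_one 5 H
    have d : Nat.card (Sylow 5 H) ∣ Nat.card H := (Sylow.card_dvd_index A).trans A.index_dvd_card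
    have pos : 0 < Nat.card (Sylow 5 H) := Nat.card_pos
    rcases hc with h | h <;> rw [h] at d
    · have := Nat.le_of_dvd (by norm_num) d
      generalize Nat.card (Sylow 5 H) = n at *
      interval_cases n <;> revert m d <;> simp [Nat.ModEq]
    · have := Nat.le_of_dvd (by norm_num) d
      generalize Nat.card (Sylow 5 H) = n at *
      interval_cases n <;> revert m d <;> simp [Nat.ModEq]
  have hss : Subsingleton (Sylow 5 H) := (Nat.card_eq_one_iff_unique.mp hn).1
  have hAB : A = B := Subsingleton.elim _ _
  have : Subgroup.zpowers a = Subgroup.zpowers b := congrArg (fun s : Sylow 5 H => (s : Subgroup H)) hAB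
  have hb' : b ∈ Subgroup.zpowers a := this ▸ Subgroup.mem_zpowers b
  obtain ⟨k, hk⟩ := Submonoid.mem_powers_iff _ _ |>.1 ((mem_powers_iff_mem_zpowers).2 hb')
  refine ⟨⟨k % 5, Nat.mod_lt _ (by norm_num)⟩, ?_⟩
  simp only
  rw [← hk, ← ha, pow_mod_orderOf]

lemma core {G Y : Type*} [Group G] [Finite G] [MulAction G Y] [Finite Y]
    [MulAction.IsPretransitive G Y] (hY : Nat.card Y = 6)
    (ρ : G →* Perm (Fin 5)) (hρ : Function.Injective ρ) (hA : alternatingGroup (Fin 5) ≤ ρ.range)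
    (hG : Nat.card G = 60 ∨ Nat.card G = 120) (g : G) :
    Nat.card (MulAction.fixedBy Y g) ≤ 
    (Finset.univ.filter fun i : Fin 6 => ∃ k : Fin 5, ∀ x, ρ g (cyc i x) = (cyc i ^ (k:ℕ)) (ρ g x)).card := by
  have : Fact (Nat.Prime 5) := ⟨by norm_num⟩
  have h0 : ∀ i, ∃ h, ρ h = cyc i := fun i => hA (Perm.mem_alternatingGroup.2 (cyc_sign i))
  choose h hh using h0
  have ho : ∀ i, orderOf (h i) = 5 := fun i => by
    rw [← orderOf_injective ρ hρ, hh]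
    exact orderOf_eq_prime (cyc_pow i) (cyc_ne i)
  have hst : ∀ y : Y, Nat.card (MulAction.stabilizer G y) = 10 ∨
      Nat.card (MulAction.stabilizer G y) = 20 := fun y => by
    have h1 := MulAction.index_stabilizer_of_transitive G y
    have h2 := (MulAction.stabilizer G y).card_mul_index
    rw [h1, hY] at h2
    omega
  have hfix : ∀ i, ∃ y : Y, h i • y = y := fun i => by
    have hp : IsPGroup 5 (Subgroup.zpowers (h i)) := by
      apply IsPGroup.of_card (n := 1)
      rw [Nat.card_zpowers, ho, pow_one]
    have := hp.card_modEq_card_fixedPoints Y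
    rw [hY] at this
    have : 0 < Nat.card (MulAction.fixedPoints (Subgroup.zpowers (h i)) Y) := by
      rcases Nat.eq_zero_or_pos (Nat.card (MulAction.fixedPoints (Subgroup.zpowers (h i)) Y)) with h0 | h0
      · rw [h0] at this; exact absurd this (by decide)
      · exact h0
    obtain ⟨⟨y, hy⟩⟩ := (Nat.card_pos_iff.1 this).1
    exact ⟨y, hy ⟨h i, Subgroup.mem_zpowers _⟩⟩
  choose y hy using hfix
  have hpow : ∀ i (u : G), u • y i = y i → orderOf u = 5 → ∃ k : Fin 5, u = h i ^ (k : ℕ) := by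
    intro i u hu huo
    obtain ⟨k, hk⟩ := syl (hst (y i)) (⟨h i, MulAction.mem_stabilizer_iff.2 (hy i)⟩ : MulAction.stabilizer G (y i))
      ⟨u, MulAction.mem_stabilizer_iff.2 hu⟩
      (by rw [Subgroup.orderOf_mk, ho]) (by rw [Subgroup.orderOf_mk, huo])
    exact ⟨k, congrArg Subtype.val hk⟩
  have yinj : Function.Injective y := by
    intro i j hij
    obtain ⟨k, hk⟩ := hpow j (h i) (hij ▸ hy i) (ho i)
    apply cyc_inj i j k
    rw [← hh, ← hh, hk, map_pow]
  have ybij : Function.Bijective y := by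
    rw [Nat.bijective_iff_injective_and_card]
    exact ⟨yinj, by simp [hY]⟩
  classical
  rw [← Fintype.card_subtype, ← Nat.card_eq_fintype_card]
  let e := Equiv.ofBijective y ybij
  have key : ∀ i, g • y i = y i → ∃ k : Fin 5, ∀ x, ρ g (cyc i x) = (cyc i ^ (k:ℕ)) (ρ g x) := by
    intro i hi
    have hi' : g⁻¹ • y i = y i := by rw [inv_smul_eq_iff, hi]
    obtain ⟨k, hk⟩ := hpow i (g * h i * g⁻¹) (by rw [mul_smul, mul_smul, hi', hy, hi]) (by
      rw [show g * h i * g⁻¹ = MulAut.conj g (h i) from rfl]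
      exact (orderOf_injective (MulAut.conj g).toMonoidHom (MulAut.conj g).injective (h i)).trans (ho i))
    refine ⟨k, fun x => ?_⟩
    have h1 : g * h i = h i ^ (k:ℕ) * g := by rw [← hk]; group
    have h2 := congrArg (fun u => ρ u x) h1
    simpa [hh] using h2
  refine Nat.card_le_card_of_injective
    (fun z => (⟨e.symm z.1, key _ ?_⟩ : {i : Fin 6 // ∃ k : Fin 5, ∀ x, ρ g (cyc i x) = (cyc i ^ (k:ℕ)) (ρ g x)})) ?_
  · have := z.2
    have h3 : y (e.symm z.1) = z.1 := e.apply_symm_apply _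
    rw [h3]; exact this
  · intro a b hab
    simp at hab
    exact Subtype.ext hab

lemma faithful {G X : Type*} [Group G] [Finite G] [MulAction G X] [Finite X]
    [MulAction.IsPretransitive G X] (hX : Nat.card X = 5)
    (hG : Nonempty (G ≃* alternatingGroup (Fin 5)) ∨ Nonempty (G ≃* Perm (Fin 5))) :
    Function.Injective (MulAction.toPermHom G X) := by
  rw [← MonoidHom.ker_eq_bot_iff]
  by_contra hne
  set k := (MulAction.toPermHom G X).ker
  have h5 : 5 ∣ k.index := by
    have : Nonempty X := (Nat.card_pos_iff.1 (by rw [hX]; norm_num)).1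
    obtain ⟨x⟩ := this
    have h1 := MulAction.index_stabilizer_of_transitive G x
    rw [← hX, ← h1]
    apply Subgroup.index_dvd_of_le
    intro u hu
    have : MulAction.toPermHom G X u = 1 := hu
    exact congrArg (fun f => f x) this
  have h2 : k.index ∣ 2 := by
    rcases hG with ⟨⟨e⟩⟩ | ⟨⟨e⟩⟩
    · have : IsSimpleGroup (alternatingGroup (Fin 5)) := alternatingGroup.isSimpleGroup (by simp)
      have := (MulEquiv.isSimpleGroup_congr e).2 inferInstance
      rcases (inferInstance : k.Normal).eq_bot_or_eq_top with h | h
      · exact absurd h hne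
      · rw [h]; simp
    · have hn : (k.map e.toMonoidHom).Normal := Subgroup.Normal.map inferInstance _ e.surjective
      have hnt : Nontrivial (k.map e.toMonoidHom) := by
        rw [Subgroup.nontrivial_iff_ne_bot]
        intro hb
        rw [Subgroup.map_eq_bot_iff_of_injective _ e.injective] at hb
        exact hne hb
      have hle := Equiv.Perm.alternatingGroup_le_of_normal (α := Fin 5) (by simp) (N := k.map e.toMonoidHom) hnt
      have := Subgroup.index_dvd_of_le hle
      rw [alternatingGroup.index_eq_two] at this
      have h4 := Subgroup.index_map_equiv k e
      rw [← h4]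
      exact this
  have := h5.trans h2
  revert this; decide

lemma grp {G X Y : Type*} [Group G] [Finite G] [MulAction G X] [Fintype X] [DecidableEq X]
    [MulAction G Y] [Fintype Y] [DecidableEq Y]
    [MulAction.IsPretransitive G X] (hX : Nat.card X = 5)
    [MulAction.IsPretransitive G Y] (hY : Nat.card Y = 6)
    (hG : Nonempty (G ≃* alternatingGroup (Fin 5)) ∨ Nonempty (G ≃* Perm (Fin 5))) (g : G) :
    Nat.card (MulAction.fixedBy Y g) ≤ Nat.card (MulAction.fixedBy X g) + 1 ∧
    Perm.sign (MulAction.toPermHom G X g) = Perm.sign (MulAction.toPermHom G Y g) := by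
  have hinj := faithful hX hG
  have e : X ≃ Fin 5 := Finite.equivFinOfCardEq hX
  let ρ : G →* Perm (Fin 5) := e.permCongrHom.toMonoidHom.comp (MulAction.toPermHom G X)
  have hρ : Function.Injective ρ := e.permCongrHom.injective.comp hinj
  have hρe : ∀ u x, ρ u x = e (u • e.symm x) := fun u x => rfl
  have c1 : Nat.card (alternatingGroup (Fin 5)) = 60 := by
    have := two_mul_nat_card_alternatingGroup (α := Fin 5)
    rw [Nat.card_perm, Nat.card_fin, show Nat.factorial 5 = 120 from rfl] at this
    omega
  have c2 : Nat.card (Perm (Fin 5)) = 120 := by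
    rw [Nat.card_perm, Nat.card_fin]; rfl
  have hc : Nat.card G = 60 ∨ Nat.card G = 120 := by
    rcases hG with ⟨⟨f⟩⟩ | ⟨⟨f⟩⟩
    · left; rw [Nat.card_congr f.toEquiv, c1]
    · right; rw [Nat.card_congr f.toEquiv, c2]
  have hcr : Nat.card ρ.range = Nat.card G := (Nat.card_congr (MonoidHom.ofInjective hρ).toEquiv).symm
  have hA : alternatingGroup (Fin 5) ≤ ρ.range := by
    apply Perm.alternatingGroup_le_of_index_le_two
    have := ρ.range.card_mul_index
    rw [hcr, c2] at this
    rcases hc with h | h <;> rw [h] at this <;> omega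
  have core' := core (Y := Y) hY ρ hρ hA hc
  refine ⟨(core' g).trans ((key (ρ g)).trans (Nat.add_le_add_right ?_ 1)), ?_⟩
  · rw [← Fintype.card_subtype, ← Nat.card_eq_fintype_card]
    refine Nat.card_le_card_of_injective (fun z => (⟨e.symm z.1, ?_⟩ : MulAction.fixedBy X g)) ?_
    · have := z.2
      rw [hρe] at this
      rw [MulAction.mem_fixedBy, Equiv.eq_symm_apply, this]
    · intro a b hab
      simp at hab
      exact Subtype.ext hab
  · let s5 : G →* ℤˣ := Perm.sign.comp (MulAction.toPermHom G X)
    let s6 : G →* ℤˣ := Perm.sign.comp (MulAction.toPermHom G Y)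
    change s5 g = s6 g
    rcases hG with ⟨⟨f⟩⟩ | ⟨⟨f⟩⟩
    · have hG60 : Nat.card G = 60 := by rw [Nat.card_congr f.toEquiv, c1]
      have : IsSimpleGroup (alternatingGroup (Fin 5)) := alternatingGroup.isSimpleGroup (by simp)
      have := (MulEquiv.isSimpleGroup_congr f).2 inferInstance
      have triv : ∀ s : G →* ℤˣ, ∀ u, s u = 1 := by
        intro s u
        rcases (inferInstance : s.ker.Normal).eq_bot_or_eq_top with h | h
        · exfalso
          have := Nat.card_le_card_of_injective s ((MonoidHom.ker_eq_bot_iff s).1 h)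
          rw [hG60, Nat.card_eq_fintype_card] at this
          revert this; decide
        · have : u ∈ s.ker := h ▸ Subgroup.mem_top u
          exact this
      rw [triv s5, triv s6]
    · have hG120 : Nat.card G = 120 := by rw [Nat.card_congr f.toEquiv, c2]
      have hbij : Function.Bijective ρ :=
        (Nat.bijective_iff_injective_and_card ρ).2 ⟨hρ, by rw [hG120, c2]⟩
      let E : G ≃* Perm (Fin 5) := MulEquiv.ofBijective ρ hbij
      have hE : ∀ u, ρ (E.symm u) = u := E.apply_symm_apply
      have surj : ∀ s : G →* ℤˣ, s (E.symm (swap 0 1)) = -1 → s.comp E.symm.toMonoidHom = Perm.sign := by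
        intro s hs
        apply Perm.eq_sign_of_surjective_hom
        intro z
        rcases Int.units_eq_one_or z with h | h
        · exact ⟨1, by simp [h]⟩
        · exact ⟨swap 0 1, by rw [h, ← hs]; rfl⟩
      have h5 : s5 (E.symm (swap 0 1)) = -1 := by
        have : Perm.sign (ρ (E.symm (swap 0 1))) = s5 (E.symm (swap 0 1)) := Perm.sign_permCongr _ _
        rw [← this, hE]; decide
      have h6 : s6 (E.symm (swap 0 1)) = -1 := by
        set t := E.symm (swap 0 1)
        have ht2 : t ^ 2 = 1 := by
          rw [← map_pow, pow_two, swap_mul_self, map_one]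
        have h0 := core' t
        rw [hE, key2] at h0
        have h1 : (MulAction.toPermHom G Y t) ^ 2 = 1 := by rw [← map_pow, ht2, map_one]
        have h2 := Perm.sign_of_pow_two_eq_one h1
        have h3 : Fintype.card (Function.fixedPoints (MulAction.toPermHom G Y t)) = 0 := by
          rw [← Nat.card_eq_fintype_card]
          exact Nat.le_zero.1 h0
        change Perm.sign (MulAction.toPermHom G Y t) = -1
        rw [h2, h3, ← Nat.card_eq_fintype_card, hY]
        decide
      have := (surj s5 h5).trans (surj s6 h6).symm
      have := congrArg (fun s => s (E g)) this
      simpa using this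


section sq
variable {N : Type*} [Field N] [NumberField N] [IsGalois ℚ N]

noncomputable instance embAct (K : IntermediateField ℚ N) : MulAction (N ≃ₐ[ℚ] N) (K →ₐ[ℚ] N) where
  smul g φ := (g : N →ₐ[ℚ] N).comp φ
  one_smul _ := rfl
  mul_smul _ _ _ := rfl

lemma embAct_apply (K : IntermediateField ℚ N) (g : N ≃ₐ[ℚ] N) (φ : K →ₐ[ℚ] N) (x : K) :
    (g • φ) x = g (φ x) := rfl

instance embTrans (K : IntermediateField ℚ N) :
    MulAction.IsPretransitive (N ≃ₐ[ℚ] N) (K →ₐ[ℚ] N) where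
  exists_smul_eq φ ψ := by
    let v : K →ₐ[ℚ] N := K.val
    have h : ∀ φ : K →ₐ[ℚ] N, ∃ g : N ≃ₐ[ℚ] N, g • v = φ := by
      intro φ
      refine ⟨AlgEquiv.ofBijective (φ.liftNormal N) ((φ.liftNormal N).normal_bijective ℚ N N), ?_⟩
      ext x
      exact φ.liftNormal_commutes N x
    obtain ⟨g, hg⟩ := h φ
    obtain ⟨g', hg'⟩ := h ψ
    exact ⟨g' * g⁻¹, by rw [mul_smul, ← hg, inv_smul_smul, hg']⟩

lemma emb_card (K : IntermediateField ℚ N) : Nat.card (K →ₐ[ℚ] N) = Module.finrank ℚ K := by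
  rw [Nat.card_eq_fintype_card]
  refine AlgHom.card_of_splits ℚ K N (fun x => ?_)
  rw [← minpoly.algebraMap_eq (algebraMap K N).injective x]
  exact Normal.splits inferInstance _

lemma delta (K : IntermediateField ℚ N) [DecidableEq (K →ₐ[ℚ] N)] :
    ∃ δ : N, δ ^ 2 = algebraMap ℚ N (NumberField.discr K) ∧
      ∀ g : N ≃ₐ[ℚ] N, g δ = (Perm.sign (MulAction.toPermHom (N ≃ₐ[ℚ] N) (K →ₐ[ℚ] N) g) : ℤ) * δ := by
  classical
  have hcard : Fintype.card (Module.Free.ChooseBasisIndex ℤ (NumberField.RingOfIntegers K)) =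
      Fintype.card (K →ₐ[ℚ] N) := by
    rw [← Nat.card_eq_fintype_card (α := K →ₐ[ℚ] N), emb_card,
      Module.finrank_eq_card_basis (NumberField.integralBasis K)]
  have e := Fintype.equivOfCardEq hcard
  refine ⟨(Algebra.embeddingsMatrixReindex ℚ N (NumberField.integralBasis K) e).det, ?_, ?_⟩
  · let E := AlgebraicClosure N
    let j : N →ₐ[ℚ] E := IsScalarTower.toAlgHom ℚ N E
    let c : (K →ₐ[ℚ] N) → (K →ₐ[ℚ] E) := fun φ => j.comp φ
    have hc : Function.Bijective c := by
      rw [Nat.bijective_iff_injective_and_card]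
      refine ⟨fun φ ψ h => ?_, ?_⟩
      · ext x
        exact j.injective (congrArg (fun f : K →ₐ[ℚ] E => f x) h)
      · rw [emb_card, Nat.card_eq_fintype_card, AlgHom.card]
    have h1 := Algebra.discr_eq_det_embeddingsMatrixReindex_pow_two ℚ E
      (NumberField.integralBasis K) (e.trans (Equiv.ofBijective c hc))
    rw [NumberField.coe_discr]
    apply j.injective
    change j _ = j _
    rw [AlgHom.commutes j, h1, map_pow]
    congr 1
    refine (RingHom.map_det (j : N →+* E) _).trans ?_
    congr 1
  · intro g
    set M := Algebra.embeddingsMatrixReindex ℚ N (NumberField.integralBasis K) e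
    set π := e.symm.permCongr (MulAction.toPermHom (N ≃ₐ[ℚ] N) (K →ₐ[ℚ] N) g)
    have h1 : g M.det = (M.submatrix id π).det := by
      have := RingHom.map_det (g : N →+* N) M
      refine Eq.trans this ?_
      congr 1
      ext i j
      simp [M, π, Algebra.embeddingsMatrixReindex, Algebra.embeddingsMatrix, Matrix.reindex_apply,
        permCongr_apply]
      rfl
    rw [h1, Matrix.det_permute', Perm.sign_permCongr]

lemma sqclass (K L : IntermediateField ℚ N) [DecidableEq (K →ₐ[ℚ] N)] [DecidableEq (L →ₐ[ℚ] N)]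
    (h : ∀ g : N ≃ₐ[ℚ] N, Perm.sign (MulAction.toPermHom (N ≃ₐ[ℚ] N) (K →ₐ[ℚ] N) g) =
      Perm.sign (MulAction.toPermHom (N ≃ₐ[ℚ] N) (L →ₐ[ℚ] N) g)) :
    IsSquare (NumberField.discr K * NumberField.discr L) := by
  obtain ⟨a, ha, ha'⟩ := delta K
  obtain ⟨b, hb, hb'⟩ := delta L
  have hfix : ∀ g : N ≃ₐ[ℚ] N, g (a * b) = a * b := by
    intro g
    rw [map_mul, ha', hb', h]
    rcases Int.units_eq_one_or (Perm.sign (MulAction.toPermHom (N ≃ₐ[ℚ] N) (L →ₐ[ℚ] N) g)) with h | h <;>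
      rw [h] <;> simp
  obtain ⟨q, hq⟩ := IntermediateField.mem_bot.1 ((IsGalois.mem_bot_iff_fixed (F := ℚ) (a * b)).2 hfix)
  rw [← Rat.isSquare_intCast_iff]
  refine ⟨q, ?_⟩
  apply (algebraMap ℚ N).injective
  rw [Int.cast_mul, map_mul, map_mul, ← ha, ← hb, hq]
  ring
end sq


lemma clear_den {N : Type*} [Field N] [NumberField N] (x : 𝓞 N)
    (hx : Algebra.adjoin ℚ {(x : N)} = ⊤) :
    ∃ a : ℤ, a ≠ 0 ∧ ∀ b : 𝓞 N, (a : 𝓞 N) * b ∈ Algebra.adjoin ℤ {x} := by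
  have hxi : IsIntegral ℤ (x : N) := x.isIntegral_coe
  let pb : PowerBasis ℚ N := PowerBasis.ofAdjoinEqTop' (hxi.tower_top) hx
  have hgen : pb.gen = (x : N) := PowerBasis.ofAdjoinEqTop'_gen _ _
  have hint : IsIntegral ℤ pb.gen := by rw [hgen]; exact hxi
  have hd : IsIntegral ℤ (Algebra.discr ℚ pb.basis) := by
    apply Algebra.discr_isIntegral
    intro i
    rw [pb.basis_eq_pow]
    exact hint.pow _
  obtain ⟨a, ha⟩ := IsIntegrallyClosed.isIntegral_iff.1 hd
  refine ⟨a, ?_, ?_⟩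
  · rintro rfl
    apply Algebra.discr_not_zero_of_basis ℚ pb.basis
    rw [← ha, map_zero]
  · intro b
    have h1 := Algebra.discr_mul_isIntegral_mem_adjoin (R := ℤ) ℚ hint b.isIntegral_coe
    rw [hgen, ← ha] at h1
    have h2 : ((algebraMap ℤ ℚ a) • (b : N)) = (Algebra.ofId ℤ N : ℤ →ₐ[ℤ] N) a * b := by
      rw [Algebra.smul_def]; simp
    let f : 𝓞 N →ₐ[ℤ] N := IsScalarTower.toAlgHom ℤ (𝓞 N) N
    have h3 : Algebra.adjoin ℤ {(x : N)} = (Algebra.adjoin ℤ {x}).map f := by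
      rw [AlgHom.map_adjoin_singleton]; rfl
    rw [h3, h2] at h1
    obtain ⟨z, hz, hz'⟩ := h1
    have : z = (a : 𝓞 N) * b := by
      apply NumberField.RingOfIntegers.coe_injective
      refine Eq.trans hz' ?_
      simp
    rwa [← this]

lemma prim_of_gal {N : Type*} [Field N] [NumberField N] [IsGalois ℚ N] (x : N)
    (h : ∀ σ : N ≃ₐ[ℚ] N, σ x = x → σ = 1) : Algebra.adjoin ℚ {x} = ⊤ := by
  have h1 : IntermediateField.adjoin ℚ {x} = ⊤ := by
    rw [← IsGalois.fixedField_fixingSubgroup (IntermediateField.adjoin ℚ {x})]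
    have : (IntermediateField.adjoin ℚ {x}).fixingSubgroup = ⊥ := by
      rw [eq_bot_iff]
      intro σ hσ
      rw [Subgroup.mem_bot]
      apply h
      rw [IntermediateField.mem_fixingSubgroup_iff] at hσ
      exact hσ _ (IntermediateField.mem_adjoin_simple_self ℚ x)
    rw [this]
    exact IntermediateField.fixedField_bot
  rw [← IntermediateField.adjoin_simple_toSubalgebra_of_isAlgebraic (Algebra.IsAlgebraic.isAlgebraic x), h1]
  rfl

lemma prim_shift {N : Type*} [Field N] [NumberField N] [IsGalois ℚ N] (y : 𝓞 N) (c : ℤ) (hc : c ≠ 0) :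
    ∃ x : 𝓞 N, (∃ t, x = y + c * t) ∧ Algebra.adjoin ℚ {(x : N)} = ⊤ := by
  obtain ⟨θ, hθ⟩ := Field.exists_primitive_element ℚ N
  obtain ⟨d, hd, hdi⟩ := IsAlgebraic.exists_integral_multiple (R := ℤ) (z := θ)
    ((IsFractionRing.isAlgebraic_iff ℤ ℚ N).2 (Algebra.IsAlgebraic.isAlgebraic (R := ℚ) θ))
  let t : 𝓞 N := ⟨d • θ, hdi⟩
  have ht : ∀ σ : N ≃ₐ[ℚ] N, σ (t : N) = t → σ = 1 := by
    intro σ hσ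
    have h1 : σ (d • θ) = d • θ := hσ
    rw [map_zsmul] at h1
    have h2 : σ θ = θ := smul_right_injective N hd h1
    have h3 : IntermediateField.adjoin ℚ {θ} ≤ IntermediateField.fixedField (Subgroup.zpowers σ) := by
      rw [IntermediateField.adjoin_simple_le_iff, IntermediateField.mem_fixedField_iff]
      intro f hf
      have : Subgroup.zpowers σ ≤ MulAction.stabilizer (N ≃ₐ[ℚ] N) θ := by
        rw [Subgroup.zpowers_le]; exact h2
      exact this hf
    ext z
    have := h3 (hθ ▸ IntermediateField.mem_top : z ∈ _)
    rw [IntermediateField.mem_fixedField_iff] at this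
    exact this σ (Subgroup.mem_zpowers σ)
  classical
  let bad : (N ≃ₐ[ℚ] N) → Set ℕ := fun σ => {n | σ ≠ 1 ∧ σ (y + c * (n * t) : N) = y + c * (n * t)}
  have hbad : (⋃ σ, bad σ).Finite := by
    apply Set.finite_iUnion
    intro σ
    apply Set.Subsingleton.finite
    rintro n ⟨h1, hn⟩ m ⟨-, hm⟩
    simp only [map_add, map_mul, map_natCast, map_intCast] at hn hm
    have h2 : (c : N) * ((n : N) - m) * (σ t - t) = 0 := by linear_combination hn - hm
    have hcN : (c : N) ≠ 0 := by exact_mod_cast hc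
    rcases mul_eq_zero.1 h2 with h3 | h3
    · rcases mul_eq_zero.1 h3 with h4 | h4
      · exact absurd h4 hcN
      · exact_mod_cast sub_eq_zero.1 h4
    · exact absurd (ht σ (sub_eq_zero.1 h3)) h1
  obtain ⟨n, hn⟩ := hbad.exists_notMem
  refine ⟨y + c * (n * t), ⟨n * t, rfl⟩, prim_of_gal _ ?_⟩
  intro σ hσ
  by_contra h1
  apply hn
  rw [Set.mem_iUnion]
  refine ⟨σ, h1, ?_⟩
  simpa using hσ

def GoodGen {B : Type*} [CommRing B] (P : Ideal B) (q : ℕ) (ζ : B) : Prop :=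
  (∀ y : B, y ∈ P ∨ ∃ n : ℕ, y - ζ ^ n ∈ P) ∧ ζ ^ q - ζ ∈ P ∧ ζ ^ q - ζ ∉ P ^ 2 ∧ ζ ∉ P

lemma good_residue {B : Type*} [CommRing B] (P : Ideal B) [P.IsMaximal] [Finite (B ⧸ P)] :
    ∃ ζ : B, ζ ∉ P ∧ ∀ y : B, y ∈ P ∨ ∃ n : ℕ, y - ζ ^ n ∈ P := by
  let _ := Ideal.Quotient.field P
  obtain ⟨g, hg⟩ := IsCyclic.exists_generator (α := (B ⧸ P)ˣ)
  obtain ⟨ζ, hζ⟩ := Ideal.Quotient.mk_surjective (g : B ⧸ P)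
  refine ⟨ζ, fun h => ?_, fun y => ?_⟩
  · rw [← Ideal.Quotient.eq_zero_iff_mem, hζ] at h
    exact g.ne_zero h
  by_cases hy : y ∈ P
  · exact Or.inl hy
  right
  have hy0 : Ideal.Quotient.mk P y ≠ 0 := fun h => hy (Ideal.Quotient.eq_zero_iff_mem.1 h)
  obtain ⟨n, hn⟩ := (mem_powers_iff_mem_zpowers (y := Units.mk0 _ hy0) (x := g)).2 (hg _)
  refine ⟨n, ?_⟩
  rw [← Ideal.Quotient.eq, map_pow, hζ]
  have := congrArg Units.val hn
  simpa using this.symm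

lemma good_of_sub {B : Type*} [CommRing B] (P : Ideal B) (q : ℕ) (ζ x : B) (h : GoodGen P q ζ)
    (hx : x - ζ ∈ P ^ 2) : GoodGen P q x := by
  have hx1 : x - ζ ∈ P := Ideal.pow_le_self two_ne_zero hx
  have hpow : ∀ n, x ^ n - ζ ^ n ∈ P ^ 2 := fun n =>
    Ideal.mem_of_dvd _ (sub_dvd_pow_sub_pow x ζ n) hx
  have hd : (x ^ q - x) - (ζ ^ q - ζ) ∈ P ^ 2 := by
    have := (P ^ 2).sub_mem (hpow q) hx
    convert this using 1; ring
  obtain ⟨h1, h2, h3, h4⟩ := h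
  refine ⟨fun y => ?_, ?_, ?_, ?_⟩
  · rcases h1 y with h | ⟨n, h⟩
    · exact Or.inl h
    · refine Or.inr ⟨n, ?_⟩
      have := P.sub_mem h (Ideal.pow_le_self two_ne_zero (hpow n))
      convert this using 1; ring
  · have := P.add_mem (Ideal.pow_le_self two_ne_zero hd) h2
    convert this using 1; ring
  · intro h
    apply h3
    have := (P ^ 2).sub_mem h hd
    convert this using 1; ring
  · intro h
    apply h4
    have := P.sub_mem h hx1
    convert this using 1; ring

lemma exists_good {B : Type*} [CommRing B] [IsDedekindDomain B] (P : Ideal B) [P.IsMaximal]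
    [Finite (B ⧸ P)] (hP : P ≠ ⊥) : ∃ ζ : B, GoodGen P (Nat.card (B ⧸ P)) ζ := by
  classical
  let _ := Ideal.Quotient.field P
  let _ := Fintype.ofFinite (B ⧸ P)
  set q := Nat.card (B ⧸ P) with hq
  have hqP : ∀ y : B, y ^ q - y ∈ P := by
    intro y
    rw [← Ideal.Quotient.eq, map_pow, hq, Nat.card_eq_fintype_card, FiniteField.pow_card]
  have hq0 : (q : B) ∈ P := by
    rw [← Ideal.Quotient.eq_zero_iff_mem, map_natCast, hq, Nat.card_eq_fintype_card]
    exact FiniteField.cast_card_eq_zero _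
  obtain ⟨ζ, hζ0, hζ⟩ := good_residue P
  by_cases h : ζ ^ q - ζ ∈ P ^ 2
  · obtain ⟨π, hπ, hπ2⟩ := Ideal.exists_mem_pow_notMem_pow_succ P hP
      (Ideal.IsMaximal.ne_top ‹_›) 1
    rw [pow_one] at hπ
    refine ⟨ζ + π, ⟨fun y => ?_, hqP _, ?_, fun h => hζ0 ((P.add_mem_iff_left hπ).1 h)⟩⟩
    · rcases hζ y with h | ⟨n, h⟩
      · exact Or.inl h
      · refine Or.inr ⟨n, ?_⟩
        have h2 : (ζ + π) ^ n - ζ ^ n ∈ P :=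
          Ideal.mem_of_dvd _ (sub_dvd_pow_sub_pow (ζ + π) ζ n) (by simpa using hπ)
        have := P.sub_mem h h2
        convert this using 1; ring
    · intro h2
      apply hπ2
      obtain ⟨k, hk⟩ := Polynomial.powAddExpansion ζ π q
      rw [hk] at h2
      have h3 : (q : B) * π ∈ P ^ 2 := by rw [pow_two]; exact Ideal.mul_mem_mul hq0 hπ
      have h4 : π ^ 2 ∈ P ^ 2 := Ideal.pow_mem_pow hπ 2
      have h5 : π = (ζ ^ q - ζ) + ζ ^ (q - 1) * (q * π) + k * π ^ 2 -
        (ζ ^ q + q * ζ ^ (q - 1) * π + k * π ^ 2 - (ζ + π)) := by ring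
      change π ∈ P ^ 2
      rw [h5]
      exact (P ^ 2).sub_mem ((P ^ 2).add_mem ((P ^ 2).add_mem h ((P ^ 2).mul_mem_left _ h3))
        ((P ^ 2).mul_mem_left _ h4)) h2
  · exact ⟨ζ, hζ, hqP ζ, h, hζ0⟩

lemma good_approx {B : Type*} [CommRing B] [IsDedekindDomain B] (P : Ideal B) [P.IsMaximal]
    (hP : P ≠ ⊥) (q : ℕ) (x : B) (h : GoodGen P q x) (m : ℕ) (y : B) :
    ∃ z ∈ Algebra.adjoin ℤ {x}, y - z ∈ P ^ m := by
  have hxA : x ∈ Algebra.adjoin ℤ {x} := Algebra.self_mem_adjoin_singleton ℤ x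
  have hPp : Prime P := Ideal.prime_of_isPrime hP inferInstance
  obtain ⟨h1, h2, h3, -⟩ := h
  set u := x ^ q - x with hu
  have huA : u ∈ Algebra.adjoin ℤ {x} := sub_mem (pow_mem hxA _) hxA
  have hun : ∀ m : ℕ, u ^ m ∉ P ^ (m + 1) := by
    intro m hm
    have e1 : emultiplicity P (Ideal.span {u}) = 1 := by
      have : emultiplicity P (Ideal.span {u}) = ((1 : ℕ) : ℕ∞) := by
        rw [emultiplicity_eq_coe, pow_one, Ideal.dvd_span_singleton, Ideal.dvd_span_singleton]
        exact ⟨h2, h3⟩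
      simpa using this
    have e2 : ((m + 1 : ℕ) : ℕ∞) ≤ emultiplicity P (Ideal.span {u} ^ m) := by
      rw [← pow_dvd_iff_le_emultiplicity, Ideal.span_singleton_pow, Ideal.dvd_span_singleton]
      exact hm
    rw [emultiplicity_pow hPp, e1, mul_one] at e2
    have : m + 1 ≤ m := by exact_mod_cast e2
    omega
  induction m with
  | zero => exact ⟨0, zero_mem _, by simp⟩
  | succ m ih =>
    obtain ⟨z, hz, hyz⟩ := ih
    obtain ⟨d, e, he, hde⟩ := Ideal.exists_mul_add_mem_pow_succ hP (u ^ m) (y - z)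
      (Ideal.pow_mem_pow h2 m) (hun m) hyz
    rcases h1 d with hd | ⟨n, hn⟩
    · refine ⟨z, hz, ?_⟩
      rw [← hde]
      refine Ideal.add_mem _ ?_ he
      rw [pow_succ]
      exact Ideal.mul_mem_mul (Ideal.pow_mem_pow h2 m) hd
    · refine ⟨z + u ^ m * x ^ n, add_mem hz (mul_mem (pow_mem huA _) (pow_mem hxA _)), ?_⟩
      have : y - (z + u ^ m * x ^ n) = u ^ m * (d - x ^ n) + e := by linear_combination -hde
      rw [this]
      refine Ideal.add_mem _ ?_ he
      rw [pow_succ]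
      exact Ideal.mul_mem_mul (Ideal.pow_mem_pow h2 m) hn

lemma exists_gen {N : Type*} [Field N] [NumberField N] [IsGalois ℚ N] (P : Ideal (𝓞 N)) [P.IsPrime]
    (hP : P ≠ ⊥) : ∃ x c : 𝓞 N, Algebra.adjoin ℚ {(x : N)} = ⊤ ∧ c ∉ P ∧
      ∀ b, c * b ∈ Algebra.adjoin ℤ {x} := by
  classical
  have : P.IsMaximal := Ring.DimensionLEOne.maximalOfPrime hP inferInstance
  have : Finite (𝓞 N ⧸ P) := Ideal.finiteQuotientOfFreeOfNeBot P hP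
  let _ := Ideal.Quotient.field P
  have hPp : Prime P := Ideal.prime_of_isPrime hP inferInstance
  obtain ⟨p, hpc⟩ := CharP.exists (𝓞 N ⧸ P)
  have hpp : p.Prime := by
    have := CharP.char_is_prime (𝓞 N ⧸ P) p
    exact this
  have hpP : (p : 𝓞 N) ∈ P := by
    rw [← Ideal.Quotient.eq_zero_iff_mem, map_natCast, CharP.cast_eq_zero]
  have hsP : ∀ s : ℤ, (s : 𝓞 N) ∈ P → (p : ℤ) ∣ s := by
    intro s hs
    rw [← Ideal.Quotient.eq_zero_iff_mem, map_intCast] at hs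
    exact (CharP.intCast_eq_zero_iff _ p s).1 hs
  have hp0 : Ideal.span {(p : 𝓞 N)} ≠ 0 := by
    rw [Ideal.zero_eq_bot, Ne, Ideal.span_singleton_eq_bot]
    exact_mod_cast hpp.ne_zero
  obtain ⟨Q, hQ, hPQ⟩ := (FiniteMultiplicity.of_prime_left hPp hp0).exists_eq_pow_mul_and_not_dvd
  set e := multiplicity P (Ideal.span {(p : 𝓞 N)})
  have hcop : IsCoprime P Q := by
    rw [Ideal.isCoprime_iff_sup_eq]
    apply (Ideal.isMaximal_def.1 ‹P.IsMaximal›).2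
    refine lt_of_le_of_ne le_sup_left fun h => hPQ ?_
    rw [Ideal.dvd_iff_le, h]
    exact le_sup_right
  have hcop2 : IsCoprime (P ^ 2) Q := hcop.pow_left
  obtain ⟨i, hi, j, hj, hij⟩ := Ideal.isCoprime_iff_exists.1 hcop2
  obtain ⟨ζ, hζ⟩ := exists_good P hP
  set q := Nat.card (𝓞 N ⧸ P)
  obtain ⟨x, ⟨t, hxt⟩, hxgen⟩ := prim_shift (ζ * j) ((p : ℤ) ^ 2)
    (pow_ne_zero _ (by exact_mod_cast hpp.ne_zero))
  push_cast at hxt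
  have hxQ : x ∈ Q := by
    have hpQ : (p : 𝓞 N) ∈ Q := by
      rw [← Ideal.dvd_span_singleton, hQ]; exact Dvd.intro_left _ rfl
    rw [hxt, pow_two, mul_assoc]
    exact Q.add_mem (Q.mul_mem_left _ hj) (Q.mul_mem_right _ hpQ)
  have hxg : GoodGen P q x := by
    apply good_of_sub P q ζ x hζ
    have : x - ζ = - ζ * i + (p : 𝓞 N) ^ 2 * t := by
      rw [hxt]; linear_combination ζ * hij
    rw [this]
    exact (P ^ 2).add_mem ((P ^ 2).mul_mem_left _ hi)
      ((P ^ 2).mul_mem_right _ (Ideal.pow_mem_pow hpP 2))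
  have hxP : x ∉ P := hxg.2.2.2
  obtain ⟨a, ha0, ha⟩ := clear_den x hxgen
  obtain ⟨k, s, hs, hak⟩ : ∃ (k : ℕ) (s : ℤ), ¬ (p : ℤ) ∣ s ∧ a = (p : ℤ) ^ k * s := by
    obtain ⟨s, h1, h2⟩ := (FiniteMultiplicity.of_prime_left (Nat.prime_iff_prime_int.1 hpp)
      ha0).exists_eq_pow_mul_and_not_dvd
    exact ⟨_, s, h2, h1⟩
  refine ⟨x, s * x ^ k, hxgen, ?_, ?_⟩
  · intro h
    rcases Ideal.IsPrime.mem_or_mem inferInstance h with h | h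
    · exact hs (hsP s h)
    · exact hxP (Ideal.IsPrime.mem_of_pow_mem inferInstance k h)
  · intro b
    have hxA : x ∈ Algebra.adjoin ℤ {x} := Algebra.self_mem_adjoin_singleton ℤ x
    have hsA : (s : 𝓞 N) ∈ Algebra.adjoin ℤ {x} := intCast_mem _ s
    obtain ⟨z, hz, hbz⟩ := good_approx P hP q x hxg (e * k) b
    have h1 : x ^ k * (b - z) ∈ Ideal.span {(p : 𝓞 N) ^ k} := by
      rw [← Ideal.span_singleton_pow, hQ, mul_pow, ← pow_mul, mul_comm (x ^ k)]
      exact Ideal.mul_mem_mul hbz (Ideal.pow_mem_pow hxQ k)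
    obtain ⟨w, hw⟩ := Ideal.mem_span_singleton'.1 h1
    have h2 : (s : 𝓞 N) * x ^ k * b = s * x ^ k * z + a * w := by
      rw [hak]; push_cast; linear_combination - (s : 𝓞 N) * hw
    rw [h2]
    exact add_mem (mul_mem (mul_mem hsA (pow_mem hxA _)) hz) (ha w)

lemma adjoinK_top {N : Type*} [Field N] [NumberField N] (K : IntermediateField ℚ N)
    (x : N) (hx : Algebra.adjoin ℚ {x} = ⊤) : Algebra.adjoin K {x} = ⊤ := by
  rw [eq_top_iff]
  intro z _
  have h : Algebra.adjoin ℚ {x} ≤ (Algebra.adjoin K {x}).restrictScalars ℚ := by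
    apply Algebra.adjoin_le
    rintro y rfl
    exact Algebra.self_mem_adjoin_singleton K _
  exact h (hx ▸ Algebra.mem_top)

lemma minpoly_prod {N : Type*} [Field N] [NumberField N] [IsGalois ℚ N] (K : IntermediateField ℚ N)
    (x : N) (hx : Algebra.adjoin ℚ {x} = ⊤) (s : Finset (N ≃ₐ[ℚ] N))
    (hs : ∀ σ, σ ∈ s ↔ σ ∈ K.fixingSubgroup) :
    (minpoly K x).map (algebraMap K N) = ∏ σ ∈ s, (Polynomial.X - Polynomial.C (σ x)) := by
  classical
  have hinj : ∀ σ τ : N ≃ₐ[ℚ] N, σ x = τ x → σ = τ := by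
    intro σ τ h
    have h1 : (σ : N →ₐ[ℚ] N) = τ := by
      refine AlgHom.ext_of_adjoin_eq_top hx ?_
      rintro y rfl
      exact h
    ext z
    exact congrArg (fun f : N →ₐ[ℚ] N => f z) h1
  have hxi : IsIntegral K x := Algebra.IsIntegral.isIntegral x
  have hgen : IntermediateField.adjoin K {x} = ⊤ := by
    rw [eq_top_iff]
    intro z _
    exact IntermediateField.algebra_adjoin_le_adjoin K {x} (adjoinK_top K x hx ▸ Algebra.mem_top)
  have hdeg : (minpoly K x).natDegree = Module.finrank K N := by
    rw [← IntermediateField.adjoin.finrank hxi, hgen, IntermediateField.finrank_top']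
  have hcard : s.card = Module.finrank K N := by
    rw [← IsGalois.card_fixingSubgroup_eq_finrank K]
    rw [← Fintype.card_coe, ← Nat.card_eq_fintype_card]
    exact Nat.card_congr (Equiv.subtypeEquivRight hs)
  have hdvd : ∏ σ ∈ s, (Polynomial.X - Polynomial.C (σ x)) ∣ (minpoly K x).map (algebraMap K N) := by
    apply Finset.prod_dvd_of_coprime
    · intro σ _ τ _ hne
      exact Polynomial.pairwise_coprime_X_sub_C (s := fun σ : N ≃ₐ[ℚ] N => σ x)
        (fun σ τ h => hinj σ τ h) hne
    · intro σ hσ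
      rw [Polynomial.dvd_iff_isRoot, Polynomial.IsRoot, Polynomial.eval_map_algebraMap]
      let σ' : N →ₐ[K] N := { (σ : N →+* N) with
        commutes' := fun r => (IntermediateField.mem_fixingSubgroup_iff _ _).1 ((hs σ).1 hσ) _ r.2 }
      change Polynomial.aeval (σ' x) _ = 0
      rw [Polynomial.aeval_algHom_apply, minpoly.aeval, map_zero]
  apply Polynomial.eq_of_monic_of_dvd_of_natDegree_le
  · exact Polynomial.monic_prod_of_monic s _ fun σ _ => Polynomial.monic_X_sub_C _
  · exact (minpoly.monic hxi).map _
  · exact hdvd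
  · rw [Polynomial.natDegree_map, hdeg, Polynomial.natDegree_prod_of_monic _ _ fun σ _ => Polynomial.monic_X_sub_C _]
    simp [hcard]

lemma deriv_prod {N : Type*} [Field N] [NumberField N] [IsGalois ℚ N] [DecidableEq (N ≃ₐ[ℚ] N)] (K : IntermediateField ℚ N)
    (x : N) (hx : Algebra.adjoin ℚ {x} = ⊤) (s : Finset (N ≃ₐ[ℚ] N))
    (hs : ∀ σ, σ ∈ s ↔ σ ∈ K.fixingSubgroup) :
    Polynomial.aeval x (Polynomial.derivative (minpoly K x)) = ∏ σ ∈ s.erase 1, (x - σ x) := by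
  rw [← Polynomial.eval_map_algebraMap, ← Polynomial.derivative_map, minpoly_prod K x hx s hs,
    ← Finset.mul_prod_erase s _ ((hs 1).2 (one_mem _)), Polynomial.derivative_mul]
  simp [Polynomial.eval_prod]

lemma adjoin_tower {A B : Type*} [CommRing A] [CommRing B] [Algebra A B] (x y : B)
    (h : y ∈ Algebra.adjoin ℤ {x}) : y ∈ Algebra.adjoin A {x} := by
  induction h using Algebra.adjoin_induction with
  | mem y hy => exact Algebra.subset_adjoin hy
  | algebraMap r => simp
  | add a b _ _ ha hb => exact add_mem ha hb
  | mul a b _ _ ha hb => exact mul_mem ha hb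

lemma diff_mult {N : Type*} [Field N] [NumberField N] [IsGalois ℚ N] [DecidableEq (N ≃ₐ[ℚ] N)]
    (K : IntermediateField ℚ N) (P : Ideal (𝓞 N)) (hP : Prime P)
    (x c : 𝓞 N) (hx : Algebra.adjoin ℚ {(x : N)} = ⊤) (hc : c ∉ P)
    (hcx : ∀ b, c * b ∈ Algebra.adjoin ℤ {x}) (s : Finset (N ≃ₐ[ℚ] N))
    (hs : ∀ σ, σ ∈ s ↔ σ ∈ K.fixingSubgroup) :
    emultiplicity P (differentIdeal (𝓞 K) (𝓞 N)) =
      ∑ σ ∈ s.erase 1, emultiplicity P (Ideal.span {x - σ • x}) := by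
  have h1 := conductor_mul_differentIdeal (𝓞 K) K N x (adjoinK_top K _ hx)
  have h2 : Polynomial.aeval x (Polynomial.derivative (minpoly (𝓞 K) x)) =
      ∏ σ ∈ s.erase 1, (x - σ • x) := by
    apply NumberField.RingOfIntegers.coe_injective
    have h3 := deriv_prod K (x : N) hx s hs
    rw [minpoly.isIntegrallyClosed_eq_field_fractions K N (Algebra.IsIntegral.isIntegral (R := 𝓞 K) x),
      Polynomial.derivative_map, Polynomial.aeval_map_algebraMap,
      Polynomial.aeval_algebraMap_apply] at h3
    refine h3.trans ?_
    rw [map_prod]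
    rfl
  have hcond : emultiplicity P (conductor (𝓞 K) x) = 0 := by
    rw [emultiplicity_eq_zero, Ideal.dvd_iff_le]
    intro hle
    apply hc
    apply hle
    intro b
    exact adjoin_tower x _ (hcx b)
  rw [h2] at h1
  have h4 := congrArg (emultiplicity P) h1
  rw [emultiplicity_mul hP, hcond, zero_add, ← Ideal.prod_span_singleton,
    Finset.emultiplicity_prod hP] at h4
  exact h4

section cmp
variable {N : Type*} [Field N] [NumberField N] [IsGalois ℚ N]

noncomputable def Jid (K : IntermediateField ℚ N) : Ideal (𝓞 N) :=
  ∏ φ : K →ₐ[ℚ] N, differentIdeal (𝓞 φ.fieldRange) (𝓞 N)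

lemma Jid_norm (K : IntermediateField ℚ N) :
    Ideal.absNorm (Jid K) * (NumberField.discr K).natAbs ^ Module.finrank ℚ N =
      (NumberField.discr N).natAbs ^ Module.finrank ℚ K := by
  have h : ∀ φ : K →ₐ[ℚ] N, (NumberField.discr N).natAbs =
      Ideal.absNorm (differentIdeal (𝓞 φ.fieldRange) (𝓞 N)) *
        (NumberField.discr K).natAbs ^ Module.finrank K N := by
    intro φ
    have e : K ≃ₐ[ℚ] φ.fieldRange := AlgEquiv.ofInjectiveField φ
    have h1 : Module.finrank φ.fieldRange N = Module.finrank K N := by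
      have a := Module.finrank_mul_finrank ℚ K N
      have b := Module.finrank_mul_finrank ℚ φ.fieldRange N
      rw [← e.toLinearEquiv.finrank_eq, ← a] at b
      exact Nat.eq_of_mul_eq_mul_left Module.finrank_pos b
    rw [NumberField.discr_eq_discr_of_algEquiv K e, ← h1]
    exact NumberField.natAbs_discr_eq_absNorm_differentIdeal_mul_natAbs_discr_pow
      φ.fieldRange (𝓞 φ.fieldRange) N (𝓞 N)
  have hc : (Finset.univ : Finset (K →ₐ[ℚ] N)).card = Module.finrank ℚ K := by
    rw [← emb_card K, Nat.card_eq_fintype_card]; rfl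
  rw [Jid, map_prod, ← Module.finrank_mul_finrank ℚ K N, mul_comm (Module.finrank ℚ K), pow_mul, ← hc,
    ← Finset.prod_const, ← Finset.prod_const, ← Finset.prod_mul_distrib]
  exact Finset.prod_congr rfl fun φ _ => (h φ).symm

lemma Jid_mult (K : IntermediateField ℚ N) [DecidableEq (N ≃ₐ[ℚ] N)] (P : Ideal (𝓞 N)) (hP : Prime P)
    (x c : 𝓞 N) (hx : Algebra.adjoin ℚ {(x : N)} = ⊤) (hc : c ∉ P)
    (hcx : ∀ b, c * b ∈ Algebra.adjoin ℤ {x}) :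
    emultiplicity P (Jid K) = ∑ σ ∈ (Finset.univ : Finset (N ≃ₐ[ℚ] N)).erase 1,
      (Nat.card (MulAction.fixedBy (K →ₐ[ℚ] N) σ) : ℕ∞) * emultiplicity P (Ideal.span {x - σ • x}) := by
  classical
  rw [Jid, Finset.emultiplicity_prod hP]
  have hs : ∀ (φ : K →ₐ[ℚ] N) (σ : N ≃ₐ[ℚ] N),
      σ ∈ (Finset.univ.filter fun σ : N ≃ₐ[ℚ] N => σ • φ = φ) ↔ σ ∈ φ.fieldRange.fixingSubgroup := by
    intro φ σ
    rw [Finset.mem_filter, IntermediateField.mem_fixingSubgroup_iff]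
    constructor
    · rintro ⟨-, h⟩ _ ⟨y, rfl⟩
      exact congrArg (fun f : K →ₐ[ℚ] N => f y) h
    · intro h
      refine ⟨Finset.mem_univ _, ?_⟩
      ext y
      exact h _ ⟨y, rfl⟩
  rw [Finset.sum_congr rfl fun φ _ => diff_mult φ.fieldRange P hP x c hx hc hcx _ (hs φ)]
  rw [Finset.sum_comm' (t' := Finset.univ.erase 1)
    (s' := fun σ => Finset.univ.filter fun φ : K →ₐ[ℚ] N => σ • φ = φ)
    (by intro φ σ; simp [and_comm])]
  refine Finset.sum_congr rfl fun σ _ => ?_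
  rw [Finset.sum_const, nsmul_eq_mul]
  congr 2
  rw [Nat.card_eq_fintype_card, Fintype.card_subtype]
  rfl

lemma Jid_dvd (K L : IntermediateField ℚ N)
    (h : ∀ σ : N ≃ₐ[ℚ] N, Nat.card (MulAction.fixedBy (L →ₐ[ℚ] N) σ) ≤
      Nat.card (MulAction.fixedBy (K →ₐ[ℚ] N) σ) + 1) :
    Jid L ∣ Jid K * Jid (⊥ : IntermediateField ℚ N) := by
  classical
  have hJ0 : Jid L ≠ 0 := by
    intro h0
    have := Jid_norm L
    rw [h0] at this
    rw [Ideal.zero_eq_bot, Ideal.absNorm_bot, zero_mul] at this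
    exact pow_ne_zero _ (Int.natAbs_ne_zero.2 (NumberField.discr_ne_zero N)) this.symm
  rw [UniqueFactorizationMonoid.dvd_iff_emultiplicity_le hJ0]
  intro P hP
  have : P.IsPrime := Ideal.isPrime_of_prime hP
  obtain ⟨x, c, hx, hc, hcx⟩ := exists_gen P hP.ne_zero
  rw [emultiplicity_mul hP, Jid_mult K P hP x c hx hc hcx, Jid_mult L P hP x c hx hc hcx,
    Jid_mult ⊥ P hP x c hx hc hcx, ← Finset.sum_add_distrib]
  refine Finset.sum_le_sum fun σ _ => ?_
  rw [← add_mul]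
  gcongr
  have h1 : Nat.card (MulAction.fixedBy ((⊥ : IntermediateField ℚ N) →ₐ[ℚ] N) σ) = 1 := by
    have hs : Nat.card ((⊥ : IntermediateField ℚ N) →ₐ[ℚ] N) = 1 := by
      rw [emb_card, IntermediateField.finrank_bot]
    rw [Nat.card_eq_one_iff_unique] at hs
    obtain ⟨_, ⟨f⟩⟩ := hs
    rw [Nat.card_eq_one_iff_unique]
    exact ⟨inferInstance, ⟨f, Subsingleton.elim _ _⟩⟩
  rw [h1]
  exact_mod_cast h σ

lemma discr_dvd (K L : IntermediateField ℚ N)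
    (hKL : Module.finrank ℚ L = Module.finrank ℚ K + 1)
    (h : ∀ σ : N ≃ₐ[ℚ] N, Nat.card (MulAction.fixedBy (L →ₐ[ℚ] N) σ) ≤
      Nat.card (MulAction.fixedBy (K →ₐ[ℚ] N) σ) + 1) :
    NumberField.discr K ∣ NumberField.discr L := by
  rw [← Int.natAbs_dvd_natAbs, ← Nat.pow_dvd_pow_iff (Module.finrank_pos (R := ℚ) (M := N)).ne']
  obtain ⟨t, ht⟩ := Jid_dvd K L h
  have h1 := congrArg Ideal.absNorm ht
  rw [map_mul, map_mul] at h1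
  have hK := Jid_norm K
  have hL := Jid_norm L
  have hB := Jid_norm (⊥ : IntermediateField ℚ N)
  have hb : (NumberField.discr (⊥ : IntermediateField ℚ N)).natAbs = 1 := by
    rw [NumberField.discr_eq_discr_of_algEquiv _ (IntermediateField.botEquiv ℚ N)]
    simp
  rw [IntermediateField.finrank_bot, hb, one_pow, mul_one, pow_one] at hB
  rw [hB] at h1
  rw [hKL, pow_succ, ← hK] at hL
  have hpos : 0 < Ideal.absNorm (Jid L) := by
    rcases Nat.eq_zero_or_pos (Ideal.absNorm (Jid L)) with h0 | h0
    · exfalso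
      have := Jid_norm L
      rw [h0, zero_mul] at this
      exact pow_ne_zero _ (Int.natAbs_ne_zero.2 (NumberField.discr_ne_zero N)) this.symm
    · exact h0
  refine ⟨Ideal.absNorm t, Nat.eq_of_mul_eq_mul_left hpos ?_⟩
  rw [hL, mul_right_comm, h1]
  ring

end cmp

end S16

/-- If `N/ℚ` is Galois with group `A₅` or `S₅` and `K₅`, `K₆` are subfields of `N` of
degrees 5 and 6 over `ℚ`, then `D_{K₆}/D_{K₅}` is the square of a (nonzero) integer. -/
theorem stmt16 (N : Type) [Field N] [NumberField N] [IsGalois ℚ N]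
    (hgal : Nonempty ((N ≃ₐ[ℚ] N) ≃* alternatingGroup (Fin 5)) ∨
            Nonempty ((N ≃ₐ[ℚ] N) ≃* Equiv.Perm (Fin 5)))
    (K₅ K₆ : IntermediateField ℚ N)
    (h5 : Module.finrank ℚ K₅ = 5) (h6 : Module.finrank ℚ K₆ = 6) :
    ∃ r : ℤ, r ≠ 0 ∧ NumberField.discr K₆ = NumberField.discr K₅ * r ^ 2 := by
  classical
  have c5 : Nat.card (K₅ →ₐ[ℚ] N) = 5 := by rw [S16.emb_card, h5]
  have c6 : Nat.card (K₆ →ₐ[ℚ] N) = 6 := by rw [S16.emb_card, h6]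
  have hg := fun g : N ≃ₐ[ℚ] N => S16.grp (X := K₅ →ₐ[ℚ] N) (Y := K₆ →ₐ[ℚ] N) c5 c6 hgal g
  have hsq := S16.sqclass K₅ K₆ fun g => (hg g).2
  obtain ⟨k, hk⟩ := S16.discr_dvd K₅ K₆ (by rw [h5, h6]) fun g => (hg g).1
  have h0 := NumberField.discr_ne_zero K₅
  have h0' := NumberField.discr_ne_zero K₆
  obtain ⟨m, hm⟩ := hsq
  rw [hk] at hm
  have hdvd : NumberField.discr K₅ ∣ m := by
    rw [← Int.pow_dvd_pow_iff two_ne_zero]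
    exact ⟨k, by linear_combination -hm⟩
  obtain ⟨r, rfl⟩ := hdvd
  have hkr : k = r ^ 2 := by
    have h2 : NumberField.discr K₅ ^ 2 ≠ 0 := pow_ne_zero _ h0
    apply mul_left_cancel₀ h2
    linear_combination hm
  refine ⟨r, ?_, by rw [hk, hkr]⟩
  rintro rfl
  apply h0'
  rw [hk, hkr]
  ring
end
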